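/- arXiv:1411.6354 — 5 statements merged into one kernel-verified Lean document; each statement's English description precedes it below -/
import Mathlib

section
/- Let w be a bounded weight structure on a triangulated category C and let D be a full triangulated subcategory of C such that w restricts to D. Let l : C → C/D be the Verdier quotient functor and let w_{C/D} denote the induced weight structure on C/D (given by the Karoubi-closures of l(C_{w≤0}) and l(C_{w≥0})). If X is an object of C with l(X) ∈ (C/D)_{w_{C/D}≥0}, then there is a distinguished triangle d → X → c → d[1] in C with c ∈ C_{w≥0} and d an object of D lying in C_{w≤−1}. -/
/-! The category `C` is only assumed pretriangulated, so the argument avoids the octahedral axiom.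
In its place, cones are controlled through Hom groups: the cone of `φ : d ⟶ X` lies in `C_{w≥j+1}`
if and only if `φ` is surjective on morphisms out of objects of `C_{w≤j}` and `φ[1]` is injective
on them (`IsApprox`, `isApprox_iff`). This property satisfies a five lemma (`isApprox_middle`).

Two facts about the quotient functor `L` are needed.

* If `L a = 0`, then `a` factors through an object of `P` (`factorsThrough_of_map_eq_zero`).
  The multiplicative closure of the class of morphisms with cone in `P` has a left calculus of
  fractions (`hasLeftCalculus`), so `a ≫ s = 0` for a composite `s` of such morphisms, and they are
  removed from `s` one at a time (`factorsThrough_of_comp`).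
* `Hom(L T, L Y) = 0` for `T ∈ C_{w≤j}` and `Y ∈ C_{w≥j+1}` (`quotient_orth`). A morphism is a
  fraction `T ⟶ Y' ⟵ Y`. The zero object approximates `Y`, and since `w` restricts to `P`, an
  approximation by an object of `P` can be carried along to `Y'` (`exists_approx_of_coneIn`);
  hence `T ⟶ Y'` factors through `P`.

Now let `j ≤ -1` and let `c ∈ C_{w≥j}` be such that `L c` has weight at least `0`. A weight
truncation `t ⟶ c` with `t ∈ C_{w≤j}` is killed by `L`, so it factors through an object of `P`.
Truncating that object twice inside `P` gives `e ∈ P` of weight at most `j` approximating `c` in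
weights at most `j` (`exists_lowest_piece`). By boundedness `X ∈ C_{w≥i}` for some `i`, so `d = 0`
approximates `X` in low weights; gluing to `d` the lowest piece of the cone of `d ⟶ X` raises the
weight by one (`exists_approx_succ`), and after finitely many steps the cone is in `C_{w≥0}`. -/

open CategoryTheory CategoryTheory.Limits CategoryTheory.Pretriangulated

namespace CWH

/-- `X` is a retract of `Y`. -/
def IsRetract {C : Type*} [Category C] (X Y : C) : Prop :=
  ∃ (i : X ⟶ Y) (r : Y ⟶ X), i ≫ r = 𝟙 X

/-- The Karoubi-closure of a class of objects: all retracts of its objects. -/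
def retractClosure {C : Type*} [Category C] (S : Set C) : Set C :=
  {X : C | ∃ Y ∈ S, IsRetract X Y}

variable (C : Type*) [Category C] [HasZeroObject C] [HasShift C ℤ]
  [Preadditive C] [∀ n : ℤ, (shiftFunctor C n).Additive] [Pretriangulated C]

/-- A weight structure on a (pre)triangulated category (homological convention):
a pair of retract-closed classes `LE = C_{w≤0}` and `GE = C_{w≥0}` such that
`C_{w≤0} ⊆ C_{w≤0}[1]`, `C_{w≥0}[1] ⊆ C_{w≥0}`, `Hom(C_{w≤0}, C_{w≥0}[1]) = 0`,
and every object admits a weight decomposition. -/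
structure WeightStructure where
  LE : Set C
  GE : Set C
  retract_LE : ∀ ⦃X Y : C⦄, IsRetract X Y → Y ∈ LE → X ∈ LE
  retract_GE : ∀ ⦃X Y : C⦄, IsRetract X Y → Y ∈ GE → X ∈ GE
  shift_LE : ∀ ⦃X : C⦄, X ∈ LE → X⟦(-1 : ℤ)⟧ ∈ LE
  shift_GE : ∀ ⦃X : C⦄, X ∈ GE → X⟦(1 : ℤ)⟧ ∈ GE
  orthogonal : ∀ ⦃X Y : C⦄, X ∈ LE → Y ∈ GE → ∀ f : X ⟶ Y⟦(1 : ℤ)⟧, f = 0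
  decomp : ∀ M : C, ∃ (X Y : C) (f : X ⟶ M) (g : M ⟶ Y) (h : Y ⟶ X⟦(1 : ℤ)⟧),
    Triangle.mk f g h ∈ (distTriang C) ∧ X ∈ LE ∧ Y⟦(-1 : ℤ)⟧ ∈ GE

variable {C}

namespace WeightStructure

variable (w : WeightStructure C)

/-- `C_{w≤i} = C_{w≤0}[i]`. -/
def le (i : ℤ) : Set C := {X : C | X⟦(-i)⟧ ∈ w.LE}

/-- `C_{w≥i} = C_{w≥0}[i]`. -/
def ge (i : ℤ) : Set C := {X : C | X⟦(-i)⟧ ∈ w.GE}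

/-- `C_{w=i} = C_{w≤i} ∩ C_{w≥i}`. -/
def eqw (i : ℤ) : Set C := w.le i ∩ w.ge i

/-- `w` is bounded if every object lies in some `C_{w≤i}` and in some `C_{w≥i}`. -/
def IsBounded : Prop := ∀ X : C, (∃ i : ℤ, X ∈ w.le i) ∧ (∃ i : ℤ, X ∈ w.ge i)

end WeightStructure

/-- The extension-closure of a class `S` of objects: the smallest class containing
the zero objects and `S` and closed under extensions (distinguished triangles). -/
inductive ExtClosure (S : Set C) : C → Prop
  | zero (X : C) : IsZero X → ExtClosure S X
  | of (X : C) : X ∈ S → ExtClosure S X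
  | ext {A E B : C} (f : A ⟶ E) (g : E ⟶ B) (h : B ⟶ A⟦(1 : ℤ)⟧) :
      Triangle.mk f g h ∈ (distTriang C) → ExtClosure S A → ExtClosure S B → ExtClosure S E

/-- The smallest full Karoubi-closed (strict) triangulated subcategory containing `S`:
closure under zero objects, shifts, cones and retracts. -/
inductive TriangClosure (S : Set C) : C → Prop
  | of (X : C) : X ∈ S → TriangClosure S X
  | zero (X : C) : IsZero X → TriangClosure S X
  | shift (X : C) (n : ℤ) : TriangClosure S X → TriangClosure S (X⟦n⟧)
  | ext {X Y Z : C} (f : X ⟶ Y) (g : Y ⟶ Z) (h : Z ⟶ X⟦(1 : ℤ)⟧) :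
      Triangle.mk f g h ∈ (distTriang C) → TriangClosure S X → TriangClosure S Y →
      TriangClosure S Z
  | retract (X Y : C) : IsRetract X Y → TriangClosure S Y → TriangClosure S X

/-- A (strict) full triangulated subcategory, given by its class of objects:
it contains the zero objects and is closed under shifts and under the
two-out-of-three property for distinguished triangles. -/
structure IsTriangulatedSub (P : Set C) : Prop where
  zero : ∀ X : C, IsZero X → X ∈ P
  shift : ∀ X ∈ P, ∀ n : ℤ, X⟦n⟧ ∈ P
  ext₂ : ∀ ⦃X Y Z : C⦄ (f : X ⟶ Y) (g : Y ⟶ Z) (h : Z ⟶ X⟦(1 : ℤ)⟧),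
    Triangle.mk f g h ∈ (distTriang C) → X ∈ P → Z ∈ P → Y ∈ P
  ext₃ : ∀ ⦃X Y Z : C⦄ (f : X ⟶ Y) (g : Y ⟶ Z) (h : Z ⟶ X⟦(1 : ℤ)⟧),
    Triangle.mk f g h ∈ (distTriang C) → X ∈ P → Y ∈ P → Z ∈ P
  ext₁ : ∀ ⦃X Y Z : C⦄ (f : X ⟶ Y) (g : Y ⟶ Z) (h : Z ⟶ X⟦(1 : ℤ)⟧),
    Triangle.mk f g h ∈ (distTriang C) → Y ∈ P → Z ∈ P → X ∈ P

/-- A weight structure on the full (triangulated) subcategory of `C` whose objects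
are given by the class `P`; retracts are taken inside `P` and the distinguished
triangles of the subcategory are the distinguished triangles of `C` with vertices
in `P`. -/
structure IsWeightStructureOn (P LEs GEs : Set C) : Prop where
  le_sub : LEs ⊆ P
  ge_sub : GEs ⊆ P
  retract_le : ∀ ⦃X Y : C⦄, X ∈ P → IsRetract X Y → Y ∈ LEs → X ∈ LEs
  retract_ge : ∀ ⦃X Y : C⦄, X ∈ P → IsRetract X Y → Y ∈ GEs → X ∈ GEs
  shift_le : ∀ ⦃X : C⦄, X ∈ LEs → X⟦(-1 : ℤ)⟧ ∈ LEs
  shift_ge : ∀ ⦃X : C⦄, X ∈ GEs → X⟦(1 : ℤ)⟧ ∈ GEs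
  orthogonal : ∀ ⦃X Y : C⦄, X ∈ LEs → Y ∈ GEs → ∀ f : X ⟶ Y⟦(1 : ℤ)⟧, f = 0
  decomp : ∀ M ∈ P, ∃ (X Y : C) (f : X ⟶ M) (g : M ⟶ Y) (h : Y ⟶ X⟦(1 : ℤ)⟧),
    Triangle.mk f g h ∈ (distTriang C) ∧ X ∈ LEs ∧ Y⟦(-1 : ℤ)⟧ ∈ GEs

/-- The class of morphisms of `C` whose cone lies in `P`; the Verdier quotient
`C/P` is the localization of `C` at this class. -/
def coneIn (P : Set C) : MorphismProperty C := fun X Y f =>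
  ∃ (Z : C) (g : Y ⟶ Z) (h : Z ⟶ X⟦(1 : ℤ)⟧),
    Triangle.mk f g h ∈ (distTriang C) ∧ Z ∈ P

/-- A weight Postnikov tower for `M`: choices of weight truncations `trunc l = w_{≤l}M`
(with cones `conePt l = w_{≥l+1}M`), of the connecting morphisms between them that are
compatible with `𝟙 M`, and of the distinguished triangles
`w_{≤l}M → w_{≤l+1}M → M^{-l-1}[l+1] → (w_{≤l}M)[1]`; the objects `termAt l = M^{-l}`
lie in the heart and are the terms of the associated weight complex `t(M)`, whose
boundary morphisms `bd (l+1) l : M^{-l-1} → M^{-l}` are obtained by composing the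
connecting morphisms of two consecutive triangles. -/
structure WeightPostnikovTower (w : WeightStructure C) (M : C) where
  trunc : ℤ → C
  trunc_mem : ∀ l : ℤ, trunc l ∈ w.le l
  ι : ∀ l : ℤ, trunc l ⟶ M
  conePt : ℤ → C
  cone_mem : ∀ l : ℤ, conePt l ∈ w.ge (l + 1)
  coneπ : ∀ l : ℤ, M ⟶ conePt l
  coneδ : ∀ l : ℤ, conePt l ⟶ (trunc l)⟦(1 : ℤ)⟧
  trunc_dist : ∀ l : ℤ, Triangle.mk (ι l) (coneπ l) (coneδ l) ∈ (distTriang C)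
  step : ∀ l : ℤ, trunc l ⟶ trunc (l + 1)
  step_ι : ∀ l : ℤ, step l ≫ ι (l + 1) = ι l
  termAt : ℤ → C
  term_mem : ∀ l : ℤ, termAt l ∈ w.LE ∧ termAt l ∈ w.GE
  sπ : ∀ l : ℤ, trunc l ⟶ (termAt l)⟦l⟧
  sδ : ∀ l : ℤ, (termAt (l + 1))⟦(l + 1 : ℤ)⟧ ⟶ (trunc l)⟦(1 : ℤ)⟧
  step_dist : ∀ l : ℤ, Triangle.mk (step l) (sπ (l + 1)) (sδ l) ∈ (distTriang C)
  bd : ∀ i j : ℤ, termAt i ⟶ termAt j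
  bd_shape : ∀ i j : ℤ, j + 1 ≠ i → bd i j = 0
  bd_eq : ∀ l : ℤ,
    (shiftFunctor C (l + 1)).map (bd (l + 1) l) ≫
      (shiftFunctorAdd' C l 1 (l + 1) rfl).hom.app (termAt l) =
    sδ l ≫ (shiftFunctor C (1 : ℤ)).map (sπ l)

/-- The differential of the weight complex associated to a weight Postnikov tower,
in "homological" indexing: the `l`-th term `termAt l` is the `(-l)`-th term `M^{-l}`
of the weight complex. -/
def towerD {w : WeightStructure C} {M : C} (T : WeightPostnikovTower w M) :
    ∀ l : ℤ, T.termAt (l + 1) ⟶ T.termAt l :=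
  fun l => T.bd (l + 1) l

section Complexes

variable {X Y : ℤ → C}

/-- A morphism of ("homologically indexed") complexes. -/
def IsChainMapDown (X Y : ℤ → C) (dX : ∀ l : ℤ, X (l + 1) ⟶ X l)
    (dY : ∀ l : ℤ, Y (l + 1) ⟶ Y l) (f : ∀ l : ℤ, X l ⟶ Y l) : Prop :=
  ∀ l : ℤ, f (l + 1) ≫ dY l = dX l ≫ f l

/-- Two families of morphisms of complexes are chain homotopic. -/
def ChainHomotopicDown (X Y : ℤ → C) (dX : ∀ l : ℤ, X (l + 1) ⟶ X l)
    (dY : ∀ l : ℤ, Y (l + 1) ⟶ Y l) (f g : ∀ l : ℤ, X l ⟶ Y l) : Prop :=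
  ∃ s : ∀ l : ℤ, X l ⟶ Y (l + 1),
    ∀ l : ℤ, f (l + 1) - g (l + 1) = s (l + 1) ≫ dY (l + 1) + dX l ≫ s l

/-- Two complexes are homotopy equivalent (i.e., isomorphic in the homotopy category). -/
def HomotopyEquivDown (X Y : ℤ → C) (dX : ∀ l : ℤ, X (l + 1) ⟶ X l)
    (dY : ∀ l : ℤ, Y (l + 1) ⟶ Y l) : Prop :=
  ∃ (f : ∀ l : ℤ, X l ⟶ Y l) (g : ∀ l : ℤ, Y l ⟶ X l),
    IsChainMapDown X Y dX dY f ∧ IsChainMapDown Y X dY dX g ∧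
    ChainHomotopicDown X X dX dX (fun l => f l ≫ g l) (fun l => 𝟙 (X l)) ∧
    ChainHomotopicDown Y Y dY dY (fun l => g l ≫ f l) (fun l => 𝟙 (Y l))

end Complexes


open scoped ZeroObject

/-! ### Exactness for triangles given by their three morphisms -/

section Exact

variable {X Y Z : C} {f : X ⟶ Y} {g : Y ⟶ Z} {h : Z ⟶ X⟦(1 : ℤ)⟧}

lemma zero₁₂ (H : Triangle.mk f g h ∈ distTriang C) : f ≫ g = 0 :=
  comp_distTriang_mor_zero₁₂ _ H

lemma zero₂₃ (H : Triangle.mk f g h ∈ distTriang C) : g ≫ h = 0 :=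
  comp_distTriang_mor_zero₂₃ _ H

lemma zero₃₁ (H : Triangle.mk f g h ∈ distTriang C) : h ≫ f⟦(1 : ℤ)⟧' = 0 :=
  comp_distTriang_mor_zero₃₁ _ H

lemma desc₂ (H : Triangle.mk f g h ∈ distTriang C) {A : C} (a : Y ⟶ A) (ha : f ≫ a = 0) :
    ∃ b : Z ⟶ A, a = g ≫ b :=
  Triangle.yoneda_exact₂ _ H a ha

lemma lift₂ (H : Triangle.mk f g h ∈ distTriang C) {A : C} (a : A ⟶ Y) (ha : a ≫ g = 0) :
    ∃ b : A ⟶ X, a = b ≫ f :=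
  Triangle.coyoneda_exact₂ _ H a ha

lemma lift₃ (H : Triangle.mk f g h ∈ distTriang C) {A : C} (a : A ⟶ Z) (ha : a ≫ h = 0) :
    ∃ b : A ⟶ Y, a = b ≫ g :=
  Triangle.coyoneda_exact₃ _ H a ha

lemma lift₁ (H : Triangle.mk f g h ∈ distTriang C) {A : C} (a : A ⟶ X⟦(1 : ℤ)⟧)
    (ha : a ≫ f⟦(1 : ℤ)⟧' = 0) : ∃ b : A ⟶ Z, a = b ≫ h :=
  Triangle.coyoneda_exact₁ _ H a ha

lemma lift₂_shift (H : Triangle.mk f g h ∈ distTriang C) {A : C} (a : A ⟶ Y⟦(1 : ℤ)⟧)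
    (ha : a ≫ g⟦(1 : ℤ)⟧' = 0) : ∃ b : A ⟶ X⟦(1 : ℤ)⟧, a = b ≫ f⟦(1 : ℤ)⟧' := by
  have key : ∃ b : A ⟶ X⟦(1 : ℤ)⟧, a = b ≫ (-f⟦(1 : ℤ)⟧') :=
    Triangle.coyoneda_exact₁ _ (rot_of_distTriang _ H) a ha
  obtain ⟨b, hb⟩ := key
  exact ⟨-b, by rw [hb, Preadditive.neg_comp, Preadditive.comp_neg]⟩

lemma exists_middle (H : Triangle.mk f g h ∈ distTriang C) {X' Y' Z' : C} {f' : X' ⟶ Y'}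
    {g' : Y' ⟶ Z'} {h' : Z' ⟶ X'⟦(1 : ℤ)⟧} (H' : Triangle.mk f' g' h' ∈ distTriang C)
    (α : X ⟶ X') (γ : Z ⟶ Z') (hαγ : h ≫ α⟦(1 : ℤ)⟧' = γ ≫ h') :
    ∃ β : Y ⟶ Y', f ≫ β = α ≫ f' ∧ g ≫ γ = β ≫ g' :=
  complete_distinguished_triangle_morphism₂ _ _ H H' α γ hαγ

end Exact

/-! ### Elementary properties of weight structures -/

section Weights

variable (w : WeightStructure C)

lemma le_of_retract {i : ℤ} {X Y : C} (h : IsRetract X Y) (hY : Y ∈ w.le i) : X ∈ w.le i := by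
  obtain ⟨a, r, har⟩ := h
  exact w.retract_LE ⟨a⟦-i⟧', r⟦-i⟧', by
    rw [← Functor.map_comp, har, CategoryTheory.Functor.map_id]⟩ hY

lemma ge_of_retract {i : ℤ} {X Y : C} (h : IsRetract X Y) (hY : Y ∈ w.ge i) : X ∈ w.ge i := by
  obtain ⟨a, r, har⟩ := h
  exact w.retract_GE ⟨a⟦-i⟧', r⟦-i⟧', by
    rw [← Functor.map_comp, har, CategoryTheory.Functor.map_id]⟩ hY

lemma LE_of_iso {X Y : C} (e : X ≅ Y) (hY : Y ∈ w.LE) : X ∈ w.LE :=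
  w.retract_LE ⟨e.hom, e.inv, e.hom_inv_id⟩ hY

lemma GE_of_iso {X Y : C} (e : X ≅ Y) (hY : Y ∈ w.GE) : X ∈ w.GE :=
  w.retract_GE ⟨e.hom, e.inv, e.hom_inv_id⟩ hY

lemma ge_zero_iff (X : C) : X ∈ w.ge 0 ↔ X ∈ w.GE :=
  ⟨GE_of_iso w ((shiftFunctorZero' C (-0 : ℤ) (by simp)).app X).symm,
    GE_of_iso w ((shiftFunctorZero' C (-0 : ℤ) (by simp)).app X)⟩

lemma shift_mem_le {X : C} {i : ℤ} (hX : X ∈ w.le i) (n j : ℤ) (hj : i + n = j) :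
    X⟦n⟧ ∈ w.le j :=
  LE_of_iso w ((shiftFunctorAdd' C n (-j) (-i) (by omega)).app X).symm hX

lemma shift_mem_ge {X : C} {i : ℤ} (hX : X ∈ w.ge i) (n j : ℤ) (hj : i + n = j) :
    X⟦n⟧ ∈ w.ge j :=
  GE_of_iso w ((shiftFunctorAdd' C n (-j) (-i) (by omega)).app X).symm hX

lemma le_mono {i j : ℤ} (hij : i ≤ j) {X : C} (hX : X ∈ w.le i) : X ∈ w.le j := by
  induction j, hij using Int.leInduction with
  | base => exact hX
  | succ n _ ih =>
    exact LE_of_iso w ((shiftFunctorAdd' C (-n) (-1) (-(n + 1)) (by omega)).app X)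
      (w.shift_LE ih)

lemma ge_anti {i j : ℤ} (hij : i ≤ j) {X : C} (hX : X ∈ w.ge j) : X ∈ w.ge i := by
  induction i, hij using Int.leInductionDown with
  | base => exact hX
  | pred n _ ih =>
    exact GE_of_iso w ((shiftFunctorAdd' C (-n) 1 (-(n - 1)) (by omega)).app X)
      (w.shift_GE ih)

lemma orth {i j : ℤ} (hij : i < j) {T Y : C} (hT : T ∈ w.le i) (hY : Y ∈ w.ge j) (f : T ⟶ Y) :
    f = 0 := by
  have hY' : Y ∈ w.ge (i + 1) := ge_anti w (by omega) hY
  let e := (shiftFunctorAdd' C (-(i + 1)) 1 (-i) (by omega)).app Y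
  have h := w.orthogonal hT hY' (f⟦-i⟧' ≫ e.hom)
  apply (shiftFunctor C (-i)).map_injective
  rw [Functor.map_zero, ← cancel_mono e.hom, h, zero_comp]

lemma exists_triangle_of_iso (T : Triangle C) (hT : T ∈ distTriang C) {M : C} (e : T.obj₂ ≅ M) :
    ∃ (f : T.obj₁ ⟶ M) (g : M ⟶ T.obj₃), Triangle.mk f g T.mor₃ ∈ distTriang C :=
  ⟨T.mor₁ ≫ e.hom, e.inv ≫ T.mor₂, isomorphic_distinguished _ hT _
    (Triangle.isoMk _ _ (Iso.refl _) e.symm (Iso.refl _)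
      (by change (T.mor₁ ≫ e.hom) ≫ e.inv = 𝟙 T.obj₁ ≫ T.mor₁; simp)
      (by change (e.inv ≫ T.mor₂) ≫ 𝟙 T.obj₃ = e.inv ≫ T.mor₂; simp)
      (by change T.mor₃ ≫ (𝟙 T.obj₁)⟦(1 : ℤ)⟧' = 𝟙 T.obj₃ ≫ T.mor₃; simp))⟩

lemma exists_shift_triangle {X Y M : C} (i : ℤ) (f : X ⟶ M⟦-i⟧) (g : M⟦-i⟧ ⟶ Y)
    (h : Y ⟶ X⟦(1 : ℤ)⟧) (H : Triangle.mk f g h ∈ distTriang C) :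
    ∃ (f' : X⟦i⟧ ⟶ M) (g' : M ⟶ Y⟦i⟧) (h' : Y⟦i⟧ ⟶ X⟦i⟧⟦(1 : ℤ)⟧),
      Triangle.mk f' g' h' ∈ distTriang C := by
  obtain ⟨f', g', H'⟩ := exists_triangle_of_iso _ (Triangle.shift_distinguished _ H i)
    ((shiftFunctorCompIsoId C (-i) i (by omega)).app M)
  exact ⟨f', g', _, H'⟩

lemma exists_decomp (i : ℤ) (M : C) : ∃ (X Y : C) (f : X ⟶ M) (g : M ⟶ Y) (h : Y ⟶ X⟦(1 : ℤ)⟧),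
    Triangle.mk f g h ∈ distTriang C ∧ X ∈ w.le i ∧ Y ∈ w.ge (i + 1) := by
  obtain ⟨X, Y, f, g, h, H, hX, hY⟩ := w.decomp (M⟦-i⟧)
  obtain ⟨f', g', h', H'⟩ := exists_shift_triangle i f g h H
  refine ⟨_, _, f', g', h', H', ?_, ?_⟩
  · exact LE_of_iso w ((shiftFunctorCompIsoId C i (-i) (by omega)).app X) hX
  · exact GE_of_iso w ((shiftFunctorAdd' C i (-(i + 1)) (-1) (by omega)).app Y).symm hY

/-- The weight decompositions of an object of `P` provided by the restriction of `w` to `P`,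
in an arbitrary weight. -/
lemma exists_decomp_on {P : Set C} (hP : IsTriangulatedSub P)
    (hres : IsWeightStructureOn P (P ∩ w.LE) (P ∩ w.GE)) (i : ℤ) {M : C} (hM : M ∈ P) :
    ∃ (X Y : C) (f : X ⟶ M) (g : M ⟶ Y) (h : Y ⟶ X⟦(1 : ℤ)⟧),
      Triangle.mk f g h ∈ distTriang C ∧ (X ∈ P ∧ X ∈ w.le i) ∧ (Y ∈ P ∧ Y ∈ w.ge (i + 1)) := by
  obtain ⟨X, Y, f, g, h, H, hX, hY⟩ := hres.decomp (M⟦-i⟧) (hP.shift _ hM _)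
  obtain ⟨f', g', h', H'⟩ := exists_shift_triangle i f g h H
  have hXP : X⟦i⟧ ∈ P := hP.shift _ hX.1 _
  refine ⟨_, _, f', g', h', H', ⟨hXP, ?_⟩, hP.ext₃ _ _ _ H' hXP hM, ?_⟩
  · exact LE_of_iso w ((shiftFunctorCompIsoId C i (-i) (by omega)).app X) hX.2
  · exact GE_of_iso w ((shiftFunctorAdd' C i (-(i + 1)) (-1) (by omega)).app Y).symm hY.2

lemma mem_le_of_orth {i : ℤ} {T : C} (hT : ∀ Y ∈ w.ge (i + 1), ∀ f : T ⟶ Y, f = 0) :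
    T ∈ w.le i := by
  obtain ⟨X, Y, f, g, h, H, hX, hY⟩ := exists_decomp w i T
  obtain ⟨s, hs⟩ := lift₂ H (𝟙 T)
    (by simpa using hT Y hY g)
  exact le_of_retract w ⟨s, f, hs.symm⟩ hX

lemma mem_ge_of_orth {i : ℤ} {Y : C} (hY : ∀ T ∈ w.le i, ∀ f : T ⟶ Y, f = 0) :
    Y ∈ w.ge (i + 1) := by
  obtain ⟨A, B, f, g, h, H, hA, hB⟩ := exists_decomp w i Y
  obtain ⟨s, hs⟩ := desc₂ H (𝟙 Y)
    (by simpa using hY A hA f)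
  exact ge_of_retract w ⟨g, s, hs.symm⟩ hB

lemma le_ext {i : ℤ} {X Y Z : C} {f : X ⟶ Y} {g : Y ⟶ Z} {h : Z ⟶ X⟦(1 : ℤ)⟧}
    (H : Triangle.mk f g h ∈ distTriang C) (hX : X ∈ w.le i) (hZ : Z ∈ w.le i) :
    Y ∈ w.le i := by
  refine mem_le_of_orth w fun A hA a => ?_
  obtain ⟨b, hb⟩ := desc₂ H a (orth w (by omega) hX hA _)
  rw [hb, orth w (by omega) hZ hA b, comp_zero]

end Weights

/-! ### Approximations -/

/-- `φ : d ⟶ X` is an approximation of `X` in weights at most `j`: it is surjective on morphisms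
out of objects of `C_{w≤j}`, and `φ[1]` is injective on them. By the long exact sequence this
says that the cone of `φ` lies in `C_{w≥j+1}`. -/
def IsApprox (w : WeightStructure C) (j : ℤ) {d X : C} (φ : d ⟶ X) : Prop :=
  (∀ T ∈ w.le j, ∀ a : T ⟶ X, ∃ b : T ⟶ d, b ≫ φ = a) ∧
    ∀ T ∈ w.le j, ∀ a : T ⟶ d⟦(1 : ℤ)⟧, a ≫ φ⟦(1 : ℤ)⟧' = 0 → a = 0

section Approx

variable (w : WeightStructure C)

lemma isApprox_iff {j : ℤ} {d X c : C} {φ : d ⟶ X} {g : X ⟶ c} {h : c ⟶ d⟦(1 : ℤ)⟧}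
    (H : Triangle.mk φ g h ∈ distTriang C) : IsApprox w j φ ↔ c ∈ w.ge (j + 1) := by
  constructor
  · rintro ⟨h₁, h₂⟩
    refine mem_ge_of_orth w fun T hT a => ?_
    have h31 : h ≫ φ⟦(1 : ℤ)⟧' = 0 := zero₃₁ H
    have h12 : φ ≫ g = 0 := zero₁₂ H
    obtain ⟨b, hb⟩ := lift₃ H a
      (h₂ T hT (a ≫ h) (by rw [Category.assoc, h31, comp_zero]))
    obtain ⟨b', rfl⟩ := h₁ T hT b
    rw [hb, Category.assoc, h12, comp_zero]
  · intro hc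
    refine ⟨fun T hT a => ?_, fun T hT a ha => ?_⟩
    · obtain ⟨b, hb⟩ := lift₂ H a (orth w (by omega) hT hc _)
      exact ⟨b, hb.symm⟩
    · obtain ⟨b, hb⟩ := lift₁ H a ha
      rw [hb, orth w (by omega) hT hc b, zero_comp]

/-- The five lemma for approximations. It replaces the octahedral axiom: the cone of the middle
morphism is controlled through its Hom groups rather than through a triangle of cones. -/
lemma isApprox_middle {j : ℤ} {A B D A' B' D' : C}
    {f : A ⟶ B} {g : B ⟶ D} {h : D ⟶ A⟦(1 : ℤ)⟧}
    {f' : A' ⟶ B'} {g' : B' ⟶ D'} {h' : D' ⟶ A'⟦(1 : ℤ)⟧}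
    (H : Triangle.mk f g h ∈ distTriang C) (H' : Triangle.mk f' g' h' ∈ distTriang C)
    {α : A ⟶ A'} {β : B ⟶ B'} {γ : D ⟶ D'}
    (h₁ : f ≫ β = α ≫ f') (h₂ : g ≫ γ = β ≫ g') (h₃ : h ≫ α⟦(1 : ℤ)⟧' = γ ≫ h')
    (hα : IsApprox w j α) (hγ : IsApprox w j γ) : IsApprox w j β := by
  have e23 : g' ≫ h' = 0 := zero₂₃ H'
  have e31 : h ≫ f⟦(1 : ℤ)⟧' = 0 := zero₃₁ H
  have h₁' : f⟦(1 : ℤ)⟧' ≫ β⟦(1 : ℤ)⟧' = α⟦(1 : ℤ)⟧' ≫ f'⟦(1 : ℤ)⟧' := by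
    rw [← Functor.map_comp, h₁, Functor.map_comp]
  have h₂' : g⟦(1 : ℤ)⟧' ≫ γ⟦(1 : ℤ)⟧' = β⟦(1 : ℤ)⟧' ≫ g'⟦(1 : ℤ)⟧' := by
    rw [← Functor.map_comp, h₂, Functor.map_comp]
  refine ⟨fun T hT b' => ?_, fun T hT b hb => ?_⟩
  · obtain ⟨c, hc⟩ := hγ.1 T hT (b' ≫ g')
    have hch : c ≫ h = 0 := hα.2 T hT _ (by
      rw [Category.assoc, h₃, ← Category.assoc, hc, Category.assoc, e23, comp_zero])
    obtain ⟨b, hb⟩ := lift₃ H c hch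
    obtain ⟨a', ha'⟩ := lift₂ H' (b' - b ≫ β) (by
      rw [Preadditive.sub_comp, ← hc, hb, Category.assoc, Category.assoc, h₂, sub_self])
    obtain ⟨a, rfl⟩ := hα.1 T hT a'
    refine ⟨b + a ≫ f, ?_⟩
    rw [Preadditive.add_comp, Category.assoc, h₁, ← Category.assoc, ← ha']
    abel
  · have hbg : b ≫ g⟦(1 : ℤ)⟧' = 0 := hγ.2 T hT _ (by
      rw [Category.assoc, h₂', ← Category.assoc, hb, zero_comp])
    obtain ⟨a, ha⟩ := lift₂_shift H b hbg
    obtain ⟨c', hc'⟩ := lift₁ H' (a ≫ α⟦(1 : ℤ)⟧') (by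
      rw [Category.assoc, ← h₁', ← Category.assoc, ← ha, hb])
    obtain ⟨c, rfl⟩ := hγ.1 T hT c'
    have hac : a - c ≫ h = 0 := hα.2 T hT _ (by
      rw [Preadditive.sub_comp, hc', Category.assoc, Category.assoc, h₃, sub_self])
    rw [ha, sub_eq_zero.1 hac, Category.assoc, e31, comp_zero]

lemma isApprox_id (j : ℤ) (X : C) : IsApprox w j (𝟙 X) :=
  ⟨fun _ _ a => ⟨a, Category.comp_id a⟩, fun _ _ a ha => by simpa using ha⟩

end Approx

/-! ### The Verdier quotient without the octahedral axiom -/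

section Quotient

variable {P : Set C}

lemma coneIn_exists_square {A B Y : C} {s : A ⟶ B}
    (hs : coneIn P s) (f : A ⟶ Y) :
    ∃ (Y' : C) (t : Y ⟶ Y') (f' : B ⟶ Y'), coneIn P t ∧ f ≫ t = s ≫ f' := by
  obtain ⟨Z, g, h, H, hZ⟩ := hs
  obtain ⟨Y', t, u, H'⟩ := distinguished_cocone_triangle₂ (h ≫ f⟦(1 : ℤ)⟧')
  obtain ⟨b, hb, -⟩ := exists_middle H H' f (𝟙 Z) (by simp)
  exact ⟨Y', t, b, ⟨Z, u, _, H', hZ⟩, hb.symm⟩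

lemma coneIn_cancel (hP : IsTriangulatedSub P) {A B Y : C} {s : A ⟶ B}
    (hs : coneIn P s) (f : B ⟶ Y) (hf : s ≫ f = 0) :
    ∃ (Y' : C) (t : Y ⟶ Y'), coneIn P t ∧ f ≫ t = 0 := by
  obtain ⟨Z, g, h, H, hZ⟩ := hs
  obtain ⟨u, hu⟩ := desc₂ H f hf
  obtain ⟨Y', t, v, H'⟩ := distinguished_cocone_triangle u
  have hut : u ≫ t = 0 := zero₁₂ H'
  refine ⟨Y', t, ⟨_, v, _, rot_of_distTriang _ H', hP.shift _ hZ _⟩, ?_⟩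
  rw [hu, Category.assoc, hut, comp_zero]

/-- Without the octahedral axiom `coneIn P` need not be stable under composition, but its
multiplicative closure still admits a left calculus of fractions. -/
lemma hasLeftCalculus (hP : IsTriangulatedSub P) :
    (coneIn P).multiplicativeClosure.HasLeftCalculusOfFractions where
  exists_leftFraction X Y φ := by
    obtain ⟨s, hs, f⟩ := φ
    suffices ∃ (Y' : C) (t : Y ⟶ Y') (f' : X ⟶ Y'),
        (coneIn P).multiplicativeClosure t ∧ f ≫ t = s ≫ f' by
      obtain ⟨Y', t, f', ht, e⟩ := this
      exact ⟨⟨f', t, ht⟩, e⟩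
    induction hs with
    | of s hs =>
      obtain ⟨Y', t, f', ht, e⟩ := coneIn_exists_square hs f
      exact ⟨Y', t, f', .of _ ht, e⟩
    | id x => exact ⟨Y, 𝟙 Y, f, .id _, by simp⟩
    | comp_of s₁ s₂ _ hs₂ ih =>
      obtain ⟨Y₁, t₁, f₁, ht₁, e₁⟩ := ih f
      obtain ⟨Y₂, t₂, f₂, ht₂, e₂⟩ := coneIn_exists_square hs₂ f₁
      refine ⟨Y₂, t₁ ≫ t₂, f₂, .comp_of _ _ ht₁ ht₂, ?_⟩
      rw [← Category.assoc, e₁, Category.assoc, e₂, Category.assoc]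
  ext X' X Y f₁ f₂ s hs hf := by
    suffices ∀ g : X ⟶ Y, s ≫ g = 0 →
        ∃ (Y' : C) (t : Y ⟶ Y'), (coneIn P).multiplicativeClosure t ∧ g ≫ t = 0 by
      obtain ⟨Y', t, ht, e⟩ := this (f₁ - f₂) (by rw [Preadditive.comp_sub, hf, sub_self])
      exact ⟨Y', t, ht, sub_eq_zero.1 (by rw [← Preadditive.sub_comp, e])⟩
    clear hf f₁ f₂
    induction hs with
    | of s hs =>
      intro g hg
      obtain ⟨Y', t, ht, e⟩ := coneIn_cancel hP hs g hg
      exact ⟨Y', t, .of _ ht, e⟩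
    | id x => exact fun g hg => ⟨Y, 𝟙 Y, .id _, by simpa using hg⟩
    | comp_of s₁ s₂ _ hs₂ ih =>
      intro g hg
      obtain ⟨Y₁, t₁, ht₁, e₁⟩ := ih (s₂ ≫ g) (by rw [← hg, Category.assoc])
      obtain ⟨Y₂, t₂, ht₂, e₂⟩ := coneIn_cancel hP hs₂ (g ≫ t₁) (by rw [← e₁, Category.assoc])
      exact ⟨Y₂, t₁ ≫ t₂, .comp_of _ _ ht₁ ht₂, by rw [← e₂, Category.assoc]⟩

lemma isLocalization_closure {E : Type*} [Category E] (L : C ⥤ E) (W : MorphismProperty C)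
    [L.IsLocalization W] : L.IsLocalization W.multiplicativeClosure := by
  -- compose `L` with the identity of `E`, seen as a localization at the empty class
  have : (𝟭 E).IsLocalization (⊥ : MorphismProperty E) := Functor.IsLocalization.for_id _ bot_le
  refine Functor.IsLocalization.comp L (𝟭 E) W ⊥ W.multiplicativeClosure ?_
    W.le_multiplicativeClosure bot_le
  intro X Y f hf
  change IsIso (L.map f)
  induction hf with
  | of f hf => exact Localization.inverts L W f hf
  | id x => rw [CategoryTheory.Functor.map_id]; infer_instance
  | comp_of f g _ hg ih =>
    have := Localization.inverts L W g hg
    rw [Functor.map_comp]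
    infer_instance

lemma exists_fibre (hP : IsTriangulatedSub P) {X X' : C} {s : X ⟶ X'} (hs : coneIn P s) :
    ∃ (p : C) (z : p ⟶ X) (y : X' ⟶ p⟦(1 : ℤ)⟧), Triangle.mk z s y ∈ distTriang C ∧ p ∈ P := by
  obtain ⟨Z, g, h, H, hZ⟩ := hs
  exact ⟨_, _, _, inv_rot_of_distTriang _ H, hP.shift _ hZ _⟩

/-- The morphism `a` factors through an object of `P`. -/
def FactorsThrough (P : Set C) {A X : C} (a : A ⟶ X) : Prop :=
  ∃ (p : C) (u : A ⟶ p) (v : p ⟶ X), p ∈ P ∧ u ≫ v = a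

/-- Factoring through `P` can be tested after composing with a morphism whose cone is in `P`.
If `a ≫ s` factors through `p` and `p₀ ⟶ X ⟶ X'` is the fibre of `s`, then `a` factors through
the direct sum of `p₀` and an extension of `p` by `p₀`. -/
lemma factorsThrough_of_comp (hP : IsTriangulatedSub P) {A X X' : C} {a : A ⟶ X} {s : X ⟶ X'}
    (hs : coneIn P s) (has : FactorsThrough P (a ≫ s)) : FactorsThrough P a := by
  obtain ⟨p₀, z, y, H, hp₀⟩ := exists_fibre hP hs
  obtain ⟨p, u, v, hp, huv⟩ := has
  obtain ⟨q, k, m, Hq⟩ := distinguished_cocone_triangle₂ (v ≫ y)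
  obtain ⟨b, -, hb⟩ := exists_middle Hq H (𝟙 p₀) v (by simp)
  obtain ⟨u', hu'⟩ := lift₃ Hq u (by
    rw [← Category.assoc, huv, Category.assoc, zero₂₃ H, comp_zero])
  obtain ⟨x, hx⟩ := lift₂ H (a - u' ≫ b) (by
    rw [Preadditive.sub_comp, Category.assoc, ← hb, ← Category.assoc, ← hu', huv, sub_self])
  refine ⟨p₀ ⊞ q, biprod.lift x u', biprod.desc z b, ?_, ?_⟩
  · exact hP.ext₂ _ _ _ (binaryBiproductTriangle_distinguished p₀ q) hp₀
      (hP.ext₂ _ _ _ Hq hp₀ hp)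
  · rw [biprod.lift_desc, ← hx, sub_add_cancel]

end Quotient

/-! ### Orthogonality in the quotient -/

section Orthogonality

variable (w : WeightStructure C) {P : Set C}

/-- An approximation by an object of `P` can be transported along a morphism with cone `p` in `P`:
the new approximating object is an extension of a weight truncation of `p` by the old one. -/
lemma exists_approx_of_coneIn (hP : IsTriangulatedSub P)
    (hres : IsWeightStructureOn P (P ∩ w.LE) (P ∩ w.GE)) {j : ℤ} {Y Y' : C} {s : Y ⟶ Y'}
    (hs : coneIn P s) (hY : ∃ (q : C) (φ : q ⟶ Y), q ∈ P ∧ IsApprox w j φ) :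
    ∃ (q : C) (φ : q ⟶ Y'), q ∈ P ∧ IsApprox w j φ := by
  obtain ⟨p, g, h, H, hp⟩ := hs
  obtain ⟨q, φ, hq, hφ⟩ := hY
  obtain ⟨c, x, y, Hc⟩ := distinguished_cocone_triangle φ
  have hc : c ∈ w.ge (j + 1) := (isApprox_iff w Hc).1 hφ
  obtain ⟨p', p'', ι, π, δ, Hp, hp', hp''⟩ := exists_decomp_on w hP hres j hp
  have hι : IsApprox w j ι := (isApprox_iff w Hp).2 hp''.2
  obtain ⟨k, hk⟩ := lift₂_shift Hc (ι ≫ h)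
    (orth w (by omega) hp'.2 (shift_mem_ge w hc 1 (j + 1 + 1) rfl) _)
  obtain ⟨q', a, b, Hq⟩ := distinguished_cocone_triangle₂ k
  obtain ⟨ψ, h₁, h₂⟩ := exists_middle Hq H φ ι hk.symm
  exact ⟨q', ψ, hP.ext₂ _ _ _ Hq hq hp'.1, isApprox_middle w Hq H h₁ h₂ hk.symm hφ hι⟩

lemma exists_approx_of_closure (hP : IsTriangulatedSub P)
    (hres : IsWeightStructureOn P (P ∩ w.LE) (P ∩ w.GE)) {j : ℤ} {Y Y' : C} {s : Y ⟶ Y'}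
    (hs : (coneIn P).multiplicativeClosure s)
    (hY : ∃ (q : C) (φ : q ⟶ Y), q ∈ P ∧ IsApprox w j φ) :
    ∃ (q : C) (φ : q ⟶ Y'), q ∈ P ∧ IsApprox w j φ := by
  induction hs with
  | of s hs => exact exists_approx_of_coneIn w hP hres hs hY
  | id x => exact hY
  | comp_of s t _ ht ih => exact exists_approx_of_coneIn w hP hres ht (ih hY)

lemma isApprox_zero {j : ℤ} {Y : C} (hY : Y ∈ w.ge (j + 1)) : IsApprox w j (0 : (0 : C) ⟶ Y) :=
  (isApprox_iff w (contractible_distinguished₁ Y)).2 hY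

lemma factorsThrough_of_closure (hP : IsTriangulatedSub P) {A X X' : C} {s : X ⟶ X'}
    (hs : (coneIn P).multiplicativeClosure s) :
    ∀ a : A ⟶ X, FactorsThrough P (a ≫ s) → FactorsThrough P a := by
  induction hs with
  | of s hs => exact fun a => factorsThrough_of_comp hP hs
  | id x => exact fun a ha => by rwa [Category.comp_id] at ha
  | comp_of s t _ ht ih =>
    exact fun a ha => ih a (factorsThrough_of_comp hP ht (by rwa [Category.assoc]))

variable {E : Type*} [Category E] [HasZeroObject E] [HasShift E ℤ]
    [Preadditive E] [∀ n : ℤ, (shiftFunctor E n).Additive] [Pretriangulated E]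
    (L : C ⥤ E) [L.CommShift ℤ] [L.IsTriangulated] [L.IsLocalization (coneIn P)]

lemma isZero_map {p : C} (hp : p ∈ P) : IsZero (L.obj p) := by
  have h : coneIn P (0 : (0 : C) ⟶ p) := ⟨_, _, _, contractible_distinguished₁ p, hp⟩
  have := Localization.inverts L (coneIn P) _ h
  exact (L.map_isZero (isZero_zero C)).of_iso (asIso (L.map (0 : (0 : C) ⟶ p))).symm

lemma map_eq_zero_of_factorsThrough {A X : C} {a : A ⟶ X} (ha : FactorsThrough P a) :
    L.map a = 0 := by
  obtain ⟨p, u, v, hp, rfl⟩ := ha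
  rw [Functor.map_comp, (isZero_map L hp).eq_of_tgt (L.map u) 0, zero_comp]

lemma factorsThrough_of_map_eq_zero (hP : IsTriangulatedSub P) {A X : C} {a : A ⟶ X}
    (ha : L.map a = 0) : FactorsThrough P a := by
  have := hasLeftCalculus hP
  have := isLocalization_closure L (coneIn P)
  obtain ⟨Z, s, hs, e⟩ := (MorphismProperty.map_eq_iff_postcomp L
    (coneIn P).multiplicativeClosure a 0).1 (by rw [ha, Functor.map_zero])
  refine factorsThrough_of_closure hP hs a ⟨0, 0, 0, hP.zero _ (isZero_zero C), ?_⟩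
  rw [e, zero_comp, zero_comp]

/-- The orthogonality axiom for the induced weight structure on the quotient. -/
lemma quotient_orth (hP : IsTriangulatedSub P)
    (hres : IsWeightStructureOn P (P ∩ w.LE) (P ∩ w.GE)) {j : ℤ} {T Y : C}
    (hT : T ∈ w.le j) (hY : Y ∈ w.ge (j + 1)) (φ : L.obj T ⟶ L.obj Y) : φ = 0 := by
  have := hasLeftCalculus hP
  have := isLocalization_closure L (coneIn P)
  obtain ⟨ψ, rfl⟩ := Localization.exists_leftFraction L (coneIn P).multiplicativeClosure φ
  obtain ⟨q, χ, hq, hχ⟩ := exists_approx_of_closure w hP hres ψ.hs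
    ⟨0, 0, hP.zero _ (isZero_zero C), isApprox_zero w hY⟩
  -- the numerator factors through the approximation of the target, hence through `P`
  obtain ⟨b, hb⟩ := hχ.1 T hT ψ.f
  have h0 : L.map ψ.f = 0 := map_eq_zero_of_factorsThrough L ⟨q, b, χ, hq, hb⟩
  simp [MorphismProperty.LeftFraction.map, h0]

end Orthogonality

/-! ### Killing weights one at a time -/

section Induction

variable (w : WeightStructure C) {P : Set C}
    {E : Type*} [Category E] [HasZeroObject E] [HasShift E ℤ]
    [Preadditive E] [∀ n : ℤ, (shiftFunctor E n).Additive] [Pretriangulated E]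
    (L : C ⥤ E) [L.CommShift ℤ] [L.IsTriangulated] [L.IsLocalization (coneIn P)]

/-- If `c ∈ C_{w≥j}` becomes of weight at least `0` in the quotient, where `j < 0`, then its
lowest weight piece can be taken in `P`: there is an object `e` of `P` of weight at most `j` and a
morphism `e ⟶ c` that approximates `c` in weights at most `j`. -/
lemma exists_lowest_piece (hP : IsTriangulatedSub P)
    (hres : IsWeightStructureOn P (P ∩ w.LE) (P ∩ w.GE)) {j : ℤ} (hj : j ≤ -1) {c : C}
    (hc : c ∈ w.ge j) (hLc : L.obj c ∈ retractClosure (L.obj '' w.GE)) :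
    ∃ (e : C) (φ : e ⟶ c), e ∈ P ∧ e ∈ w.le j ∧ IsApprox w j φ := by
  obtain ⟨_, ⟨Y, hY, rfl⟩, i, r, hir⟩ := hLc
  obtain ⟨t, t', a, a', δ, H, ht, ht'⟩ := exists_decomp w j c
  have hYj : Y ∈ w.ge (j + 1) := ge_anti w (by omega) ((ge_zero_iff w Y).2 hY)
  have ha : L.map a = 0 := by
    rw [← Category.comp_id (L.map a), ← hir, ← Category.assoc,
      quotient_orth w L hP hres ht hYj (L.map a ≫ i), zero_comp]
  obtain ⟨p, u, v, hp, huv⟩ := factorsThrough_of_map_eq_zero L hP ha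
  -- replace `p` by a truncation of weight at most `j`, then by one of weight at least `j`
  obtain ⟨p₁, p₂, ι, π, δ', Hp, hp₁, hp₂⟩ := exists_decomp_on w hP hres j hp
  obtain ⟨u₁, hu₁⟩ := lift₂ Hp u (orth w (by omega) ht hp₂.2 _)
  obtain ⟨m, e, ι', π', δ'', He, hm, he⟩ := exists_decomp_on w hP hres (j - 1) hp₁.1
  obtain ⟨φ, hφ⟩ := desc₂ He (ι ≫ v) (orth w (by omega) hm.2 hc _)
  have he_le : e ∈ w.le j := by
    refine mem_le_of_orth w fun A hA x => ?_
    have key : ∃ y : m⟦(1 : ℤ)⟧ ⟶ A, x = δ'' ≫ y :=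
      Triangle.yoneda_exact₃ _ He x (orth w (by omega) hp₁.2 hA _)
    obtain ⟨y, rfl⟩ := key
    rw [orth w (by omega) (shift_mem_le w hm.2 1 j (by omega)) hA y, comp_zero]
  refine ⟨e, φ, he.1, he_le, fun T hT x => ?_, fun T hT x _ => ?_⟩
  · obtain ⟨x', hx'⟩ := lift₂ H x (orth w (by omega) hT ht' _)
    refine ⟨x' ≫ u₁ ≫ π', ?_⟩
    rw [hx', ← huv, hu₁]
    simp only [Category.assoc, hφ]
  · exact orth w (by omega) hT (shift_mem_ge w he.2 1 (j + 1) (by omega)) x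

/-- The inductive step: an approximation of `X` by `P` in weights at most `j` is improved to
weights at most `j + 1` by gluing to it the lowest weight piece of its cone. -/
lemma exists_approx_succ (hP : IsTriangulatedSub P)
    (hres : IsWeightStructureOn P (P ∩ w.LE) (P ∩ w.GE)) {j : ℤ} (hj : j + 1 ≤ -1) {X : C}
    (hX : L.obj X ∈ retractClosure (L.obj '' w.GE))
    (h : ∃ (d : C) (φ : d ⟶ X), d ∈ P ∧ d ∈ w.le (-1) ∧ IsApprox w j φ) :
    ∃ (d : C) (φ : d ⟶ X), d ∈ P ∧ d ∈ w.le (-1) ∧ IsApprox w (j + 1) φ := by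
  obtain ⟨d, φ, hd, hd', hφ⟩ := h
  obtain ⟨c, g, k, H⟩ := distinguished_cocone_triangle φ
  have hc : c ∈ w.ge (j + 1) := (isApprox_iff w H).1 hφ
  have hg : coneIn P g := ⟨_, _, _, rot_of_distTriang _ H, hP.shift _ hd _⟩
  have hLc : L.obj c ∈ retractClosure (L.obj '' w.GE) := by
    have := Localization.inverts L (coneIn P) g hg
    obtain ⟨Y, hY, i, r, hir⟩ := hX
    exact ⟨Y, hY, inv (L.map g) ≫ i, r ≫ L.map g, by
      rw [Category.assoc, ← Category.assoc i, hir, Category.id_comp, IsIso.inv_hom_id]⟩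
  obtain ⟨e, ε, he, he', hε⟩ := exists_lowest_piece w L hP hres hj hc hLc
  obtain ⟨d', a, b, Hd⟩ := distinguished_cocone_triangle₂ (ε ≫ k)
  have hsq : (ε ≫ k) ≫ (𝟙 d)⟦(1 : ℤ)⟧' = ε ≫ k := by simp
  obtain ⟨ψ, h₁, h₂⟩ := exists_middle Hd H (𝟙 d) ε hsq
  exact ⟨d', ψ, hP.ext₂ _ _ _ Hd hd he, le_ext w Hd hd' (le_mono w hj he'),
    isApprox_middle w Hd H h₁ h₂ hsq (isApprox_id w _ d) hε⟩

end Induction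


/-- let `w` be bounded and restrict to the full triangulated subcategory
`D` (with class of objects `P`); let `L : C ⥤ E` realize the Verdier quotient `C/D`.
If `L(X)` lies in `(C/D)_{w≥0}` (the Karoubi-closure of `L(C_{w≥0})`), then there is a
distinguished triangle `d → X → c → d[1]` in `C` with `c ∈ C_{w≥0}` and `d` an object
of `D` lying in `C_{w≤-1}`. -/
theorem statement10 {E : Type*} [Category E] [HasZeroObject E] [HasShift E ℤ]
    [Preadditive E] [∀ n : ℤ, (shiftFunctor E n).Additive] [Pretriangulated E]
    (w : WeightStructure C) (hw : w.IsBounded)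
    (P : Set C) (hP : IsTriangulatedSub P)
    (hres : IsWeightStructureOn P (P ∩ w.LE) (P ∩ w.GE))
    (L : C ⥤ E) [L.CommShift ℤ] [L.IsTriangulated] [L.IsLocalization (coneIn P)]
    (X : C) (hX : L.obj X ∈ retractClosure (L.obj '' w.GE)) :
    ∃ (d c : C) (f : d ⟶ X) (g : X ⟶ c) (h : c ⟶ d⟦(1 : ℤ)⟧),
      Triangle.mk f g h ∈ (distTriang C) ∧ c ∈ w.GE ∧ d ∈ P ∧ d ∈ w.le (-1) := by
  obtain ⟨-, i, hi⟩ := hw X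
  have key : ∀ n : ℤ, min (i - 1) (-1) ≤ n → n ≤ -1 →
      ∃ (d : C) (φ : d ⟶ X), d ∈ P ∧ d ∈ w.le (-1) ∧ IsApprox w n φ := by
    intro n hn
    induction n, hn using Int.leInduction with
    | base =>
      refine fun _ => ⟨0, 0, hP.zero _ (isZero_zero C), ?_, ?_⟩
      · exact mem_le_of_orth w fun _ _ f => (isZero_zero C).eq_of_src f 0
      · exact isApprox_zero w (ge_anti w (by omega) hi)
    | succ n _ ih => exact fun hn => exists_approx_succ w L hP hres hn hX (ih (by omega))
  obtain ⟨d, φ, hd, hd', hφ⟩ := key (-1) (by omega) le_rfl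
  obtain ⟨c, g, h, H⟩ := distinguished_cocone_triangle φ
  exact ⟨d, c, φ, g, h, H, (ge_zero_iff w c).1 ((isApprox_iff w H).1 hφ), hd, hd'⟩

end CWH
end

section
/- Let w be a weight structure on a triangulated category C and let D be a full triangulated subcategory of C such that w restricts to D. Let l : C → C/D be the Verdier quotient functor and let w_{C/D} be the induced weight structure on C/D. Then the heart of w_{C/D} is the Karoubi-closure of l(C_{w=0}) in C/D: every object of (C/D)_{w_{C/D}=0} is a retract in C/D of l(X) for some X ∈ C_{w=0}, and conversely every such retract lies in (C/D)_{w_{C/D}=0}. Moreover, if w is bounded then w_{C/D} is bounded. -/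
/-!
The inclusion of the Karoubi-closure of `L(C_{w=0})` in the heart is immediate. Conversely,
let `X` be a retract of `L A` with `A ∈ C_{w≤0}` and of `L B` with `B ∈ C_{w≥0}`. Choose a
weight decomposition `H ⟶ B ⟶ Y` of `B`; since `B` and `Y[-1]` lie in `C_{w≥0}`, so does their
extension `H`, which is thus in the heart (`trunc_mem_GE`). The composite `L A ⟶ X ⟶ L B ⟶ L Y`
vanishes, so `L A ⟶ X ⟶ L B` factors through `L H`, and `X` is a retract of `L H`.

The essential point is the vanishing of `Hom(L A, L Y)` for `A ∈ C_{w≤0}`, `Y ∈ C_{w≥1}`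
(`localization_orthogonal`). As the octahedral axiom is not assumed, a calculus of fractions is
not available in general. But morphisms out of `L A` with `A ∈ C_{w≤0}` are nevertheless
fractions `L A ← L A' ⟶ L M` with `A' ∈ C_{w≤0}` (`exists_fraction`), by induction along zigzags.
The inductive step (`exists_lift`) uses that `w` restricts to `P`: given `A ⟶ M ← N` with cone
`Q ∈ P` of `N ⟶ M`, the map `A ⟶ Q` factors through `w_{≤0} Q ∈ P`, and the fibre `A'` of
`A ⟶ w_{≤0} Q` lies in `C_{w≤0}` and maps to `N`. For `M = Y` the numerator `A' ⟶ Y` is zero.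

Boundedness passes to the quotient because `L` is essentially surjective and commutes with shifts.
-/

open CategoryTheory CategoryTheory.Limits CategoryTheory.Pretriangulated

namespace CWH

variable (C : Type*) [Category C] [HasZeroObject C] [HasShift C ℤ]
  [Preadditive C] [∀ n : ℤ, (shiftFunctor C n).Additive] [Pretriangulated C]

variable {C}

/-! ### Weight structures: orthogonality and extensions -/

section Aux

variable (w : WeightStructure C)

lemma zero_of_LE {X Y : C} (hX : X ∈ w.LE) (hY : Y⟦(-1 : ℤ)⟧ ∈ w.GE) (f : X ⟶ Y) : f = 0 := by
  have e : Y ≅ (Y⟦(-1 : ℤ)⟧)⟦(1 : ℤ)⟧ := (shiftNegShift Y (1 : ℤ)).symm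
  have h := w.orthogonal hX hY (f ≫ e.hom)
  rwa [← cancel_mono e.hom, zero_comp]

/-- `C_{w≤0}` is the whole left orthogonal of `C_{w≥1}`: the weight decomposition of an
object of the orthogonal splits. -/
lemma mem_LE_of_orthogonal {X : C}
    (h : ∀ Y ∈ w.GE, ∀ f : X ⟶ Y⟦(1 : ℤ)⟧, f = 0) : X ∈ w.LE := by
  obtain ⟨A, B, f, g, k, hT, hA, hB⟩ := w.decomp X
  have e : B ≅ (B⟦(-1 : ℤ)⟧)⟦(1 : ℤ)⟧ := (shiftNegShift B (1 : ℤ)).symm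
  have hg : g = 0 := by
    rw [← cancel_mono e.hom, zero_comp]
    exact h _ hB _
  obtain ⟨s, hs⟩ : ∃ s : X ⟶ A, 𝟙 X = s ≫ f :=
    Triangle.coyoneda_exact₂ _ hT (𝟙 X) ((Category.id_comp g).trans hg)
  exact w.retract_LE ⟨s, f, hs.symm⟩ hA

/-- `C_{w≥1}` is the whole right orthogonal of `C_{w≤0}`. -/
lemma mem_GE_of_orthogonal {Y : C}
    (h : ∀ X ∈ w.LE, ∀ f : X ⟶ Y⟦(1 : ℤ)⟧, f = 0) : Y ∈ w.GE := by
  obtain ⟨A, B, f, g, k, hT, hA, hB⟩ := w.decomp (Y⟦(1 : ℤ)⟧)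
  obtain ⟨r, hr⟩ : ∃ r : B ⟶ Y⟦(1 : ℤ)⟧, 𝟙 (Y⟦(1 : ℤ)⟧) = g ≫ r :=
    Triangle.yoneda_exact₂ _ hT (𝟙 (Y⟦(1 : ℤ)⟧)) (h A hA _)
  have e : Y ≅ (Y⟦(1 : ℤ)⟧)⟦(-1 : ℤ)⟧ := (shiftShiftNeg Y (1 : ℤ)).symm
  refine w.retract_GE ⟨e.hom ≫ g⟦(-1 : ℤ)⟧', r⟦(-1 : ℤ)⟧' ≫ e.inv, ?_⟩ hB
  have h2 : g⟦(-1 : ℤ)⟧' ≫ r⟦(-1 : ℤ)⟧' = 𝟙 _ := by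
    rw [← Functor.map_comp, ← hr, CategoryTheory.Functor.map_id]
  simp [reassoc_of% h2]

/-- The fibre of a morphism between objects of `C_{w≤0}` lies in `C_{w≤0}`, being an
extension of `A` by `Q[-1]`. -/
lemma fibre_mem_LE {A' A Q : C} {t : A' ⟶ A} {a : A ⟶ Q} {d : Q ⟶ A'⟦(1 : ℤ)⟧}
    (hT : Triangle.mk t a d ∈ distTriang C) (hA : A ∈ w.LE) (hQ : Q ∈ w.LE) : A' ∈ w.LE := by
  refine mem_LE_of_orthogonal w fun Y hY f => ?_
  obtain ⟨g, hg⟩ := Triangle.yoneda_exact₂ _ (inv_rot_of_distTriang _ hT) f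
    (w.orthogonal (w.shift_LE hQ) hY _)
  rw [hg, w.orthogonal hA hY g]
  exact comp_zero

/-- For `B ∈ C_{w≥0}`, the weight truncation `w_{≤0} B` lies in `C_{w≥0}`, hence in the heart. -/
lemma trunc_mem_GE {X B Y : C} {f : X ⟶ B} {g : B ⟶ Y} {d : Y ⟶ X⟦(1 : ℤ)⟧}
    (hT : Triangle.mk f g d ∈ distTriang C) (hB : B ∈ w.GE) (hY : Y⟦(-1 : ℤ)⟧ ∈ w.GE) :
    X ∈ w.GE := by
  refine mem_GE_of_orthogonal w fun Z hZ u => ?_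
  obtain ⟨v, hv⟩ := Triangle.coyoneda_exact₁ _ hT u (w.orthogonal hZ hB _)
  rw [hv, zero_of_LE w hZ hY v]
  exact zero_comp

/-! ### Morphisms of the Verdier quotient out of objects of weight `≤ 0` -/

/-- The Ore-type condition: a morphism `f : A ⟶ M` with `A ∈ C_{w≤0}` lifts along a morphism
`s : N ⟶ M` with cone in `P`, up to replacing `A` by some `A' ⟶ A` with cone in `P` and
`A'` still in `C_{w≤0}`. -/
lemma exists_lift {P : Set C}
    (hres : IsWeightStructureOn P (P ∩ w.LE) (P ∩ w.GE))
    {A M N : C} (hA : A ∈ w.LE) (f : A ⟶ M) (s : N ⟶ M) (hs : coneIn P s) :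
    ∃ (A' : C) (t : A' ⟶ A) (f' : A' ⟶ N), A' ∈ w.LE ∧ coneIn P t ∧ t ≫ f = f' ≫ s := by
  obtain ⟨Q, g, h, hT, hQ⟩ := hs
  obtain ⟨X, Y, x, y, d, hQT, hX, hY⟩ := hres.decomp Q hQ
  -- `A ⟶ Q` factors through `w_{≤0} Q`; then `A'` is the fibre of `A ⟶ w_{≤0} Q`.
  obtain ⟨a, ha⟩ : ∃ a : A ⟶ X, f ≫ g = a ≫ x :=
    Triangle.coyoneda_exact₂ _ hQT (f ≫ g) (zero_of_LE w hA hY.2 _)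
  obtain ⟨A', t, b, hA'⟩ := distinguished_cocone_triangle₁ a
  have hta : t ≫ a = 0 := comp_distTriang_mor_zero₁₂ _ hA'
  obtain ⟨f', hlift⟩ := Triangle.coyoneda_exact₂ _ hT (t ≫ f) (by
    change (t ≫ f) ≫ g = 0
    rw [Category.assoc, ha, reassoc_of% hta, zero_comp])
  exact ⟨A', t, f', fibre_mem_LE w hA' hA hX.2, ⟨X, a, b, hA', hX.1⟩, hlift⟩

/-- Every morphism `L A ⟶ L M` with `A ∈ C_{w≤0}` is a fraction `(L t)⁻¹ ≫ L f` whose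
denominator `t : A' ⟶ A` has source in `C_{w≤0}`. Only the invertibility of `L t` is
recorded: composites of morphisms with cone in `P` need not have cone in `P` without the
octahedral axiom. -/
lemma exists_fraction {E : Type*} [Category E] {P : Set C}
    (hres : IsWeightStructureOn P (P ∩ w.LE) (P ∩ w.GE))
    (L : C ⥤ E) [L.IsLocalization (coneIn P)]
    {A : C} (hA : A ∈ w.LE) (φ : StructuredArrow (L.obj A) L) :
    ∃ (A' : C) (t : A' ⟶ A) (f : A' ⟶ φ.right), A' ∈ w.LE ∧ IsIso (L.map t) ∧
      L.map t ≫ φ.hom = L.map f := by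
  induction φ using Localization.induction_structuredArrow L (coneIn P) with
  | hP₀ => exact ⟨A, 𝟙 A, 𝟙 A, hA, inferInstance, by simp⟩
  | hP₁ g φ hφ =>
    obtain ⟨A', t, f, hA', ht, hf⟩ := hφ
    replace hf : L.map t ≫ φ = L.map f := hf
    exact ⟨A', t, f ≫ g, hA', ht, by simp [reassoc_of% hf]⟩
  | hP₂ s hs φ hφ =>
    obtain ⟨A', t, f, hA', ht, hf⟩ := hφ
    replace hf : L.map t ≫ φ = L.map f := hf
    obtain ⟨A'', t', f', hA'', ht', hf'⟩ := exists_lift w hres hA' f s hs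
    have := Localization.inverts L (coneIn P) t' ht'
    have := Localization.inverts L (coneIn P) s hs
    refine ⟨A'', t' ≫ t, f', hA'', by rw [L.map_comp]; infer_instance, ?_⟩
    rw [← cancel_mono (L.map s)]
    have h : (φ ≫ (Localization.isoOfHom L (coneIn P) s hs).inv) ≫ L.map s = φ := by simp
    change (L.map (t' ≫ t) ≫ φ ≫ (Localization.isoOfHom L (coneIn P) s hs).inv) ≫ L.map s = _
    rw [Category.assoc, h, L.map_comp, Category.assoc, hf, ← L.map_comp, hf', L.map_comp]

/-- The orthogonality axiom for the induced weight structure on the Verdier quotient. -/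
lemma localization_orthogonal {E : Type*} [Category E] [Preadditive E] {P : Set C}
    (hres : IsWeightStructureOn P (P ∩ w.LE) (P ∩ w.GE))
    (L : C ⥤ E) [L.PreservesZeroMorphisms] [L.IsLocalization (coneIn P)]
    {A Y : C} (hA : A ∈ w.LE) (hY : Y⟦(-1 : ℤ)⟧ ∈ w.GE) (φ : L.obj A ⟶ L.obj Y) : φ = 0 := by
  obtain ⟨A', t, f, hA', ht, hf⟩ := exists_fraction w hres L hA (StructuredArrow.mk φ)
  replace hf : L.map t ≫ φ = L.map f := hf
  rw [← cancel_epi (L.map t), hf, comp_zero, zero_of_LE w hA' hY f, L.map_zero]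

end Aux

/-- the heart of the weight structure induced on the Verdier quotient
`C/D` (realized by a localization `L : C ⥤ E`) is the Karoubi-closure of `L(C_{w=0})`;
moreover, if `w` is bounded then the induced weight structure is bounded. -/
theorem statement11 {E : Type*} [Category E] [HasZeroObject E] [HasShift E ℤ]
    [Preadditive E] [∀ n : ℤ, (shiftFunctor E n).Additive] [Pretriangulated E]
    (w : WeightStructure C) (P : Set C) (hP : IsTriangulatedSub P)
    (hres : IsWeightStructureOn P (P ∩ w.LE) (P ∩ w.GE))
    (L : C ⥤ E) [L.CommShift ℤ] [L.IsTriangulated] [L.IsLocalization (coneIn P)] :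
    retractClosure (L.obj '' w.LE) ∩ retractClosure (L.obj '' w.GE) =
      retractClosure (L.obj '' (w.LE ∩ w.GE)) ∧
    (w.IsBounded → ∀ X : E,
      (∃ n : ℤ, X⟦n⟧ ∈ retractClosure (L.obj '' w.LE)) ∧
      (∃ n : ℤ, X⟦n⟧ ∈ retractClosure (L.obj '' w.GE))) := by
  refine ⟨Set.Subset.antisymm ?_ ?_, ?_⟩
  · rintro X ⟨⟨_, ⟨A, hA, rfl⟩, i, r, hir⟩, ⟨_, ⟨B, hB, rfl⟩, j, q, hjq⟩⟩
    obtain ⟨H, Y, f, g, d, hT, hH, hY⟩ := w.decomp B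
    -- `L A ⟶ X ⟶ L B` factors through `L H`, as its composite to `L Y` vanishes.
    obtain ⟨u, hu⟩ : ∃ u : L.obj A ⟶ L.obj H, r ≫ j = u ≫ L.map f :=
      Triangle.coyoneda_exact₂ _ (L.map_distinguished _ hT) (r ≫ j)
        (localization_orthogonal w hres L hA hY _)
    refine ⟨_, ⟨H, ⟨hH, trunc_mem_GE w hT hB hY⟩, rfl⟩, i ≫ u, L.map f ≫ q, ?_⟩
    rw [Category.assoc, ← reassoc_of% hu, hjq, Category.comp_id, hir]
  · rintro X ⟨_, ⟨H, hH, rfl⟩, hr⟩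
    exact ⟨⟨_, ⟨H, hH.1, rfl⟩, hr⟩, ⟨_, ⟨H, hH.2, rfl⟩, hr⟩⟩
  · intro hb X
    have := Localization.essSurj L (coneIn P)
    have e := L.objObjPreimageIso X
    have key : ∀ n : ℤ, IsRetract (X⟦n⟧) (L.obj ((L.objPreimage X)⟦n⟧)) := fun n =>
      let e' := (shiftFunctor E n).mapIso e.symm ≪≫ ((L.commShiftIso n).app _).symm
      ⟨e'.hom, e'.inv, e'.hom_inv_id⟩
    obtain ⟨⟨m, hm⟩, ⟨n, hn⟩⟩ := hb (L.objPreimage X)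
    exact ⟨⟨-m, _, ⟨_, hm, rfl⟩, key _⟩, ⟨-n, _, ⟨_, hn, rfl⟩, key _⟩⟩

end CWH
end

section
/- Let w be a bounded weight structure on a triangulated category C and let M be an object of C. Then any two weight complexes of M (arising from two choices of weight Postnikov tower for M) are isomorphic in the homotopy category K(Hw), where Hw is the heart of w. Moreover, if M ∈ C_{w≥0}, then any weight complex of M is isomorphic in K(Hw) to a complex whose terms in positive degrees are zero. -/
/-!
Orthogonality lifts the identity of `M` to a morphism between any two weight Postnikov towers
(`WeightPostnikovTower.exists_compat`), hence to chain maps `f`, `g` in both directions between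
the weight complexes. The lifts are not unique, but an endomorphism of a tower over `𝟙 M` acts on
the terms as `1 + s d + d t` for two possibly different families `s` and `t`
(`WeightPostnikovTower.weak_homotopy`): on `w_{≤l}M` the difference from the identity is killed by
both neighbouring transition maps, so it factors through `M^{-l}[l] → M^{-l-1}[l]`.

Such a weak homotopy is not a chain homotopy, but a chain map `h = s d + d t` satisfies
`h² = (boundary) + n` with `n = d t s d` and `n² = 0`, so `h⁴` is null-homotopic
(`fourth_power_null`). Thus `f g = 1 + h` is invertible up to homotopy, and `f` is a homotopy
equivalence with inverse `g (1 - h) (1 + h²)` (`homotopyEquiv_of_weak`).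

For `M ∈ C_{w≥0}`, the truncations `w_{≤l}M` with `l < 0` may be taken to be `0`. Every system of
weight decompositions extends to a tower (`WeightPostnikovTower.exists_of_decompositions`), and
the terms of the resulting tower vanish for `l < 0`; by the first part its weight complex is
homotopy equivalent to the given one.
-/

open CategoryTheory CategoryTheory.Limits CategoryTheory.Pretriangulated

namespace CWH

variable (C : Type*) [Category C] [HasZeroObject C] [HasShift C ℤ]
  [Preadditive C] [∀ n : ℤ, (shiftFunctor C n).Additive] [Pretriangulated C]

variable {C}

/-! ### Exactness of `Hom` along a distinguished triangle -/

section Exactness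

variable {P Q R : C} {f : P ⟶ Q} {g : Q ⟶ R} {h : R ⟶ P⟦(1 : ℤ)⟧}

theorem dist_desc₂ (hT : Triangle.mk f g h ∈ distTriang C) {A : C} (x : Q ⟶ A)
    (hx : f ≫ x = 0) : ∃ y : R ⟶ A, x = g ≫ y :=
  Triangle.yoneda_exact₂ _ hT x hx

theorem dist_desc₃ (hT : Triangle.mk f g h ∈ distTriang C) {A : C} (x : R ⟶ A)
    (hx : g ≫ x = 0) : ∃ y : P⟦(1 : ℤ)⟧ ⟶ A, x = h ≫ y :=
  Triangle.yoneda_exact₃ _ hT x hx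

theorem dist_desc_shift (hT : Triangle.mk f g h ∈ distTriang C) {A : C} (x : Q⟦(1 : ℤ)⟧ ⟶ A)
    (hx : f⟦(1 : ℤ)⟧' ≫ x = 0) : ∃ y : R⟦(1 : ℤ)⟧ ⟶ A, x = g⟦(1 : ℤ)⟧' ≫ y := by
  have hx' : (-(f⟦(1 : ℤ)⟧')) ≫ x = 0 := by rw [Preadditive.neg_comp, hx, neg_zero]
  obtain ⟨y, hy⟩ : ∃ y : R⟦(1 : ℤ)⟧ ⟶ A, x = (-(g⟦(1 : ℤ)⟧')) ≫ y :=
    Triangle.yoneda_exact₃ _ (rot_of_distTriang _ (rot_of_distTriang _ hT)) x hx'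
  exact ⟨-y, by rw [hy, Preadditive.neg_comp, Preadditive.comp_neg]⟩

theorem dist_lift₁ (hT : Triangle.mk f g h ∈ distTriang C) {A : C} (x : A ⟶ P⟦(1 : ℤ)⟧)
    (hx : x ≫ f⟦(1 : ℤ)⟧' = 0) : ∃ y : A ⟶ R, x = y ≫ h :=
  Triangle.coyoneda_exact₁ _ hT x hx

theorem dist_lift₂ (hT : Triangle.mk f g h ∈ distTriang C) {A : C} (x : A ⟶ Q)
    (hx : x ≫ g = 0) : ∃ y : A ⟶ P, x = y ≫ f :=
  Triangle.coyoneda_exact₂ _ hT x hx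

theorem dist_lift₃ (hT : Triangle.mk f g h ∈ distTriang C) {A : C} (x : A ⟶ R)
    (hx : x ≫ h = 0) : ∃ y : A ⟶ Q, x = y ≫ g :=
  Triangle.coyoneda_exact₃ _ hT x hx

theorem dist_zero₁₂ (hT : Triangle.mk f g h ∈ distTriang C) : f ≫ g = 0 :=
  comp_distTriang_mor_zero₁₂ _ hT

theorem dist_zero₂₃ (hT : Triangle.mk f g h ∈ distTriang C) : g ≫ h = 0 :=
  comp_distTriang_mor_zero₂₃ _ hT

theorem dist_zero₃₁ (hT : Triangle.mk f g h ∈ distTriang C) : h ≫ f⟦(1 : ℤ)⟧' = 0 :=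
  comp_distTriang_mor_zero₃₁ _ hT

theorem dist_of_iso₃ (hT : Triangle.mk f g h ∈ distTriang C) {R' : C} (e : R' ≅ R) :
    Triangle.mk f (g ≫ e.inv) (e.hom ≫ h) ∈ distTriang C := by
  have h₁ : f ≫ 𝟙 Q = 𝟙 P ≫ f := by simp
  have h₂ : (g ≫ e.inv) ≫ e.hom = 𝟙 Q ≫ g := by simp
  have h₃ : (e.hom ≫ h) ≫ (𝟙 P)⟦(1 : ℤ)⟧' = e.hom ≫ h := by simp
  exact isomorphic_distinguished _ hT _
    (Triangle.isoMk _ _ (Iso.refl P) (Iso.refl Q) e h₁ h₂ h₃)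

end Exactness

/-! ### Weak homotopies -/

/-- Dependent choice along the bijection `l ↦ l + 1` of `ℤ`. -/
theorem exists_family {β : ℤ → Type*} (P : ∀ l, β (l + 1) → Prop)
    (h : ∀ l, ∃ x, P l x) : ∃ F : ∀ l, β l, ∀ l, P l (F (l + 1)) := by
  have key : ∀ m : ℤ, ∃ y : β m, ∀ (l : ℤ) (e : m = l + 1), P l (e ▸ y) := by
    intro m
    obtain ⟨k, rfl⟩ : ∃ k, m = k + 1 := ⟨m - 1, by ring⟩
    obtain ⟨x, hx⟩ := h k
    refine ⟨x, fun l e => ?_⟩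
    obtain rfl : k = l := by lia
    exact hx
  choose F hF using key
  exact ⟨F, fun l => hF (l + 1) l rfl⟩

set_option linter.unusedSectionVars false in
/-- The fourth power of a chain endomorphism `h = s d + d t` is null-homotopic. Indeed
`d t d = d s d` because `h` commutes with `d`, so `h²` is the sum of a boundary and of
`n = d t s d`, and `n² = 0`. -/
theorem fourth_power_null {X : ℤ → C} {d : ∀ l : ℤ, X (l + 1) ⟶ X l}
    (hd : ∀ l, d (l + 1) ≫ d l = 0) {h : ∀ l, X l ⟶ X l} (hh : IsChainMapDown X X d d h)
    {s t : ∀ l : ℤ, X l ⟶ X (l + 1)}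
    (hst : ∀ l, h (l + 1) = s (l + 1) ≫ d (l + 1) + d l ≫ t l) :
    ∃ U : ∀ l : ℤ, X l ⟶ X (l + 1), ∀ l,
      (h (l + 1) ≫ h (l + 1)) ≫ h (l + 1) ≫ h (l + 1) =
        U (l + 1) ≫ d (l + 1) + d l ≫ U l := by
  have hdtd : ∀ l, d l ≫ t l ≫ d l = d l ≫ s l ≫ d l := by
    intro l
    obtain ⟨k, rfl⟩ : ∃ k, l = k + 1 := ⟨l - 1, by ring⟩
    have := hh (k + 1)
    rw [hst (k + 1), hst k] at this
    simpa [hd, reassoc_of% hd] using this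
  obtain ⟨n, hn⟩ := exists_family (β := fun l => X l ⟶ X l)
    (fun l x => x = d l ≫ t l ≫ s (l + 1) ≫ d (l + 1)) (fun l => ⟨_, rfl⟩)
  -- `h² = α + n`, where `α` is null-homotopic via `u = s d t` and `n² = 0`.
  have hsq : ∀ l, h (l + 1) ≫ h (l + 1) = ((s (l + 1) ≫ d (l + 1) ≫ t (l + 1)) ≫ d (l + 1) +
      d l ≫ (s l ≫ d l ≫ t l)) + n (l + 1) := by
    intro l
    have h1 := hdtd (l + 1)
    have h2 := (hdtd l) =≫ t l
    simp only [Category.assoc] at h2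
    simp only [Category.assoc, hn, h1, ← h2]
    simp only [hst l, Preadditive.add_comp, Preadditive.comp_add, Category.assoc,
      reassoc_of% hd, zero_comp, comp_zero]
    abel
  have hdn : ∀ l, d l ≫ n l = 0 := by
    intro l
    obtain ⟨k, rfl⟩ : ∃ k, l = k + 1 := ⟨l - 1, by ring⟩
    rw [hn, reassoc_of% hd, zero_comp]
  have hnd : ∀ l, n (l + 1) ≫ d l = 0 := by
    intro l
    rw [hn]
    simp [hd]
  have hnn : ∀ l, n l ≫ n l = 0 := by
    intro l
    obtain ⟨k, rfl⟩ : ∃ k, l = k + 1 := ⟨l - 1, by ring⟩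
    nth_rw 2 [hn]
    rw [reassoc_of% hnd, zero_comp]
  have hsqc : ∀ l, (h (l + 1) ≫ h (l + 1)) ≫ d l = d l ≫ h l ≫ h l := by
    intro l
    have := hh l
    simp only [Category.assoc, this]
    simp only [← Category.assoc, this]
  obtain ⟨u, hu⟩ : ∃ u : ∀ l : ℤ, X l ⟶ X (l + 1), u = fun l => s l ≫ d l ≫ t l := ⟨_, rfl⟩
  have hsq' : ∀ l, h (l + 1) ≫ h (l + 1) = (u (l + 1) ≫ d (l + 1) + d l ≫ u l) + n (l + 1) := by
    intro l; rw [hsq, hu]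
  refine ⟨fun l => u l ≫ h (l + 1) ≫ h (l + 1) + n l ≫ u l, fun l => ?_⟩
  have e1 : (h (l + 1) ≫ h (l + 1)) ≫ h (l + 1) ≫ h (l + 1) =
      (u (l + 1) ≫ d (l + 1) + d l ≫ u l) ≫ h (l + 1) ≫ h (l + 1) +
        n (l + 1) ≫ (u (l + 1) ≫ d (l + 1) + d l ≫ u l) := by
    have := congrArg (fun x => n (l + 1) ≫ x) (hsq' l)
    simp only [Preadditive.comp_add, hnn, add_zero] at this
    rw [Preadditive.comp_add, ← this, ← Preadditive.add_comp, ← hsq']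
  rw [e1]
  have e2 := hsqc (l + 1)
  rw [Category.assoc] at e2
  simp only [Preadditive.add_comp, Preadditive.comp_add, Category.assoc, e2,
    reassoc_of% hnd, reassoc_of% hdn, zero_comp]
  abel

/-- If both composites of two chain maps differ from the identity by maps of the form
`s d + d t`, where `s` and `t` may be different, then the first chain map is a homotopy
equivalence: writing `f g = 1 + h`, a homotopy inverse of `f` is `g (1 - h) (1 + h²)`, and the
composites are `1 - h⁴` and its analogue on the other side. -/
theorem homotopyEquiv_of_weak {X Y : ℤ → C} {dX : ∀ l : ℤ, X (l + 1) ⟶ X l}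
    {dY : ∀ l : ℤ, Y (l + 1) ⟶ Y l} (hdX : ∀ l, dX (l + 1) ≫ dX l = 0)
    (hdY : ∀ l, dY (l + 1) ≫ dY l = 0) {f : ∀ l, X l ⟶ Y l} {g : ∀ l, Y l ⟶ X l}
    (hf : IsChainMapDown X Y dX dY f) (hg : IsChainMapDown Y X dY dX g)
    (hfg : ∃ s t : ∀ l : ℤ, X l ⟶ X (l + 1), ∀ l,
      f (l + 1) ≫ g (l + 1) - 𝟙 _ = s (l + 1) ≫ dX (l + 1) + dX l ≫ t l)
    (hgf : ∃ s t : ∀ l : ℤ, Y l ⟶ Y (l + 1), ∀ l,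
      g (l + 1) ≫ f (l + 1) - 𝟙 _ = s (l + 1) ≫ dY (l + 1) + dY l ≫ t l) :
    HomotopyEquivDown X Y dX dY := by
  obtain ⟨s, t, hst⟩ := hfg
  obtain ⟨s', t', hst'⟩ := hgf
  obtain ⟨h, hh⟩ : ∃ h : ∀ l, X l ⟶ X l, ∀ l, f l ≫ g l = 𝟙 _ + h l :=
    ⟨fun l => f l ≫ g l - 𝟙 _, fun l => (add_sub_cancel _ _).symm⟩
  obtain ⟨k, hk⟩ : ∃ k : ∀ l, Y l ⟶ Y l, ∀ l, g l ≫ f l = 𝟙 _ + k l :=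
    ⟨fun l => g l ≫ f l - 𝟙 _, fun l => (add_sub_cancel _ _).symm⟩
  simp only [hh, hk, add_sub_cancel_left] at hst hst'
  have hfk : ∀ l, h l ≫ f l = f l ≫ k l := by
    intro l
    have := congrArg (· ≫ f l) (hh l)
    simp only [Category.assoc, hk, Preadditive.comp_add, Preadditive.add_comp,
      Category.comp_id, Category.id_comp, add_right_inj] at this
    exact this.symm
  have hch : IsChainMapDown X X dX dX h := by
    intro l
    have h1 : (f (l + 1) ≫ g (l + 1)) ≫ dX l = dX l ≫ f l ≫ g l := by
      rw [Category.assoc, hg, ← Category.assoc, hf, Category.assoc]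
    simpa only [hh, Preadditive.comp_add, Preadditive.add_comp,
      Category.comp_id, Category.id_comp, add_right_inj] using h1
  have hck : IsChainMapDown Y Y dY dY k := by
    intro l
    have h1 : (g (l + 1) ≫ f (l + 1)) ≫ dY l = dY l ≫ g l ≫ f l := by
      rw [Category.assoc, hf, ← Category.assoc, hg, Category.assoc]
    simpa only [hk, Preadditive.comp_add, Preadditive.add_comp,
      Category.comp_id, Category.id_comp, add_right_inj] using h1
  obtain ⟨U, hU⟩ := fourth_power_null hdX hch hst
  obtain ⟨V, hV⟩ := fourth_power_null hdY hck hst'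
  refine ⟨f, fun l => g l ≫ (𝟙 _ - h l) ≫ (𝟙 _ + h l ≫ h l), hf, ?_, ⟨fun l => -U l, ?_⟩,
    ⟨fun l => -V l, ?_⟩⟩
  · intro l
    have e1 := hch l
    have e2 := hg l
    dsimp only
    have e3 : (𝟙 _ - h (l + 1)) ≫ dX l = dX l ≫ (𝟙 _ - h l) := by
      simp [e1]
    have e4 : (𝟙 _ + h (l + 1) ≫ h (l + 1)) ≫ dX l = dX l ≫ (𝟙 _ + h l ≫ h l) := by
      simp [e1, reassoc_of% e1]
    rw [Category.assoc, Category.assoc, e4, reassoc_of% e3, reassoc_of% e2]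
  · intro l
    have e := hU l
    dsimp only
    rw [Preadditive.neg_comp, Preadditive.comp_neg, ← neg_add, ← e, ← Category.assoc, hh]
    simp only [Preadditive.comp_add, Preadditive.add_comp, Preadditive.sub_comp,
      Preadditive.comp_sub, Category.comp_id, Category.id_comp, Category.assoc]
    abel
  · intro l
    have e := hV l
    have e1 := hfk (l + 1)
    have e2 := hk (l + 1)
    have e3 : (𝟙 _ - h (l + 1)) ≫ (𝟙 _ + h (l + 1) ≫ h (l + 1)) ≫ f (l + 1) =
        f (l + 1) ≫ (𝟙 _ - k (l + 1)) ≫ (𝟙 _ + k (l + 1) ≫ k (l + 1)) := by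
      simp only [Preadditive.comp_add, Preadditive.add_comp, Preadditive.sub_comp,
        Preadditive.comp_sub, Category.comp_id, Category.id_comp, Category.assoc, e1,
        reassoc_of% e1]
    dsimp only
    rw [Preadditive.neg_comp, Preadditive.comp_neg, ← neg_add, ← e, Category.assoc,
      Category.assoc, e3, ← Category.assoc, e2]
    simp only [Preadditive.comp_add, Preadditive.add_comp, Preadditive.sub_comp,
      Preadditive.comp_sub, Category.comp_id, Category.id_comp, Category.assoc]
    abel

/-! ### Orthogonality for weight structures -/

namespace WeightStructure

variable (w : WeightStructure C)

theorem LE_of_iso {X Y : C} (e : X ≅ Y) (h : Y ∈ w.LE) : X ∈ w.LE :=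
  w.retract_LE ⟨e.hom, e.inv, e.hom_inv_id⟩ h

theorem GE_of_iso {X Y : C} (e : X ≅ Y) (h : Y ∈ w.GE) : X ∈ w.GE :=
  w.retract_GE ⟨e.hom, e.inv, e.hom_inv_id⟩ h

theorem shift_mem_le {X : C} {i : ℤ} (h : X ∈ w.le i) (n j : ℤ) (hj : i + n = j) :
    X⟦n⟧ ∈ w.le j :=
  w.LE_of_iso ((shiftFunctorAdd' C n (-j) (-i) (by lia)).app X).symm h

theorem shift_mem_ge {X : C} {i : ℤ} (h : X ∈ w.ge i) (n j : ℤ) (hj : i + n = j) :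
    X⟦n⟧ ∈ w.ge j :=
  w.GE_of_iso ((shiftFunctorAdd' C n (-j) (-i) (by lia)).app X).symm h

theorem mem_le_zero {X : C} : X ∈ w.le 0 ↔ X ∈ w.LE := by
  have e : X⟦(-0 : ℤ)⟧ ≅ X := (shiftFunctorZero' C (-0 : ℤ) (by simp)).app X
  exact ⟨fun h => w.LE_of_iso e.symm h, fun h => w.LE_of_iso e h⟩

theorem mem_ge_zero {X : C} : X ∈ w.ge 0 ↔ X ∈ w.GE := by
  have e : X⟦(-0 : ℤ)⟧ ≅ X := (shiftFunctorZero' C (-0 : ℤ) (by simp)).app X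
  exact ⟨fun h => w.GE_of_iso e.symm h, fun h => w.GE_of_iso e h⟩

theorem ge_anti {X : C} {i j : ℤ} (hij : i ≤ j) (h : X ∈ w.ge j) : X ∈ w.ge i := by
  obtain ⟨n, rfl⟩ := Int.le.dest hij
  induction n with
  | zero => simpa using h
  | succ n ih =>
    refine ih (by lia) ?_
    exact w.GE_of_iso ((shiftFunctorAdd' C (-(i + (n + 1 : ℕ))) 1 (-(i + n))
      (by push_cast; ring)).app X) (w.shift_GE h)

theorem hom_eq_zero {A B : C} {i j : ℤ} (hA : A ∈ w.le i) (hB : B ∈ w.ge j) (hij : i < j)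
    (f : A ⟶ B) : f = 0 := by
  have hB' : B ∈ w.ge (i + 1) := w.ge_anti (by lia) hB
  apply (shiftFunctor C (-i)).map_injective
  have := w.orthogonal hA hB' ((shiftFunctor C (-i)).map f ≫
    (shiftFunctorAdd' C (-(i + 1)) 1 (-i) (by ring)).hom.app B)
  rw [← cancel_mono ((shiftFunctorAdd' C (-(i + 1)) 1 (-i) (by ring)).hom.app B), this]
  simp

/-- `C_{w≥i+1}` is the right orthogonal of `C_{w≤i}`. -/
theorem mem_ge_of_orthogonal {Z : C} {i : ℤ}
    (h : ∀ A ∈ w.le i, ∀ f : A ⟶ Z, f = 0) : Z ∈ w.ge (i + 1) := by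
  obtain ⟨P, Q, f, g, δ, hT, hP, hQ⟩ := w.decomp (Z⟦(-i)⟧)
  have hf : f = 0 := by
    apply (shiftFunctor C i).map_injective
    have := h _ (w.shift_mem_le (w.mem_le_zero.2 hP) i i (by simp))
      ((shiftFunctor C i).map f ≫ (shiftFunctorCompIsoId C (-i) i (by simp)).hom.app Z)
    rw [← cancel_mono ((shiftFunctorCompIsoId C (-i) i (by simp)).hom.app Z), this]
    simp
  obtain ⟨r, hr⟩ := dist_desc₂ hT (𝟙 (Z⟦(-i)⟧)) (by rw [hf, zero_comp])
  have hret : IsRetract (Z⟦(-i)⟧⟦(-1 : ℤ)⟧) (Q⟦(-1 : ℤ)⟧) :=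
    ⟨(shiftFunctor C (-1 : ℤ)).map g, (shiftFunctor C (-1 : ℤ)).map r, by
      rw [← Functor.map_comp, ← hr, CategoryTheory.Functor.map_id]⟩
  exact w.GE_of_iso ((shiftFunctorAdd' C (-i) (-1) (-(i + 1)) (by ring)).app Z)
    (w.retract_GE hret hQ)

/-- `C_{w≤i}` is the left orthogonal of `C_{w≥i+1}`. -/
theorem mem_le_of_orthogonal {Z : C} {i : ℤ}
    (h : ∀ B ∈ w.ge (i + 1), ∀ f : Z ⟶ B, f = 0) : Z ∈ w.le i := by
  obtain ⟨P, Q, f, g, δ, hT, hP, hQ⟩ := w.decomp (Z⟦(-i)⟧)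
  have hg : g = 0 := by
    apply (shiftFunctor C i).map_injective
    have := h _ (w.shift_mem_ge (i := 1) hQ i (i + 1) (by ring))
      ((shiftFunctorCompIsoId C (-i) i (by simp)).inv.app Z ≫ (shiftFunctor C i).map g)
    rw [← cancel_epi ((shiftFunctorCompIsoId C (-i) i (by simp)).inv.app Z), this]
    simp
  obtain ⟨r, hr⟩ := dist_lift₂ hT (𝟙 (Z⟦(-i)⟧)) (by rw [hg, comp_zero])
  exact w.retract_LE ⟨r, f, hr.symm⟩ hP

/-- If `P` is a truncation `w_{≤l}M`, every morphism from `C_{w≤i}`, `i ≤ l`, to `M` lifts to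
`P`. -/
theorem lift_trunc {M A P Q : C} {ι : P ⟶ M} {π : M ⟶ Q} {δ : Q ⟶ P⟦(1 : ℤ)⟧}
    (hT : Triangle.mk ι π δ ∈ distTriang C) {i l : ℤ} (hQ : Q ∈ w.ge (l + 1))
    (hA : A ∈ w.le i) (hil : i ≤ l) (y : A ⟶ M) : ∃ x : A ⟶ P, x ≫ ι = y := by
  obtain ⟨x, hx⟩ := dist_lift₂ hT y
    (w.hom_eq_zero hA hQ (by lia) _)
  exact ⟨x, hx.symm⟩

/-- If `P` is a truncation `w_{≤l}M`, lifts to `P` of a morphism from `C_{w≤i}` to `M` are unique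
when `i < l`. -/
theorem trunc_hom_ext {M A P Q : C} {ι : P ⟶ M} {π : M ⟶ Q} {δ : Q ⟶ P⟦(1 : ℤ)⟧}
    (hT : Triangle.mk ι π δ ∈ distTriang C) {i l : ℤ} (hQ : Q ∈ w.ge (l + 1))
    (hA : A ∈ w.le i) (hil : i < l) (x : A ⟶ P) (hx : x ≫ ι = 0) : x = 0 := by
  apply (shiftFunctor C (1 : ℤ)).map_injective
  obtain ⟨g, hg⟩ := dist_lift₁ hT ((shiftFunctor C (1 : ℤ)).map x)
    (by rw [← Functor.map_comp, hx, Functor.map_zero])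
  have : g = 0 := w.hom_eq_zero (w.shift_mem_le hA 1 _ rfl) hQ (by lia) _
  rw [hg, this]
  simp

end WeightStructure

/-! ### Morphisms of weight Postnikov towers -/

namespace WeightPostnikovTower

variable {w : WeightStructure C} {M : C}

theorem bd_comp_bd (T : WeightPostnikovTower w M) (l : ℤ) :
    towerD T (l + 1) ≫ towerD T l = 0 := by
  unfold towerD
  apply (shiftFunctor C (l + 1 + 1)).map_injective
  rw [← cancel_mono ((shiftFunctorAdd' C (l + 1) 1 (l + 1 + 1) rfl).hom.app (T.termAt l)),
    ← cancel_mono ((shiftFunctor C (1 : ℤ)).map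
      ((shiftFunctorAdd' C l 1 (l + 1) rfl).hom.app (T.termAt l)))]
  have h1 := T.bd_eq (l + 1)
  have h2 := T.bd_eq l
  have h3 := dist_zero₂₃ (T.step_dist l)
  have h4 := (shiftFunctorAdd' C (l + 1) 1 (l + 1 + 1) rfl).hom.naturality (T.bd (l + 1) l)
  simp only [Functor.comp_map] at h4
  rw [Functor.map_comp, Functor.map_zero, zero_comp, zero_comp, Category.assoc, Category.assoc,
    reassoc_of% h4, reassoc_of% h1, ← Functor.map_comp, h2, ← Functor.map_comp,
    reassoc_of% h3, zero_comp, Functor.map_zero, comp_zero]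

/-- A family `f` on the truncations and a family `F` on the terms of two towers form a morphism
of all the triangles `w_{≤l} → w_{≤l+1} → M^{-l-1}[l+1] → w_{≤l}[1]`, apart from the squares
involving the first map. -/
structure Compat (T₁ T₂ : WeightPostnikovTower w M) (f : ∀ l, T₁.trunc l ⟶ T₂.trunc l)
    (F : ∀ l, T₁.termAt l ⟶ T₂.termAt l) : Prop where
  comm_π : ∀ l, T₁.sπ l ≫ (F l)⟦l⟧' = f l ≫ T₂.sπ l
  comm_δ : ∀ l, T₁.sδ l ≫ (f l)⟦(1 : ℤ)⟧' = (F (l + 1))⟦l + 1⟧' ≫ T₂.sδ l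

/-- The identity of `M` lifts to a morphism between any two towers: it lifts to the truncations
by orthogonality, the lifts commute with the transition maps by orthogonality, and they extend
to the terms by the axioms of a triangulated category. -/
theorem exists_compat (T₁ T₂ : WeightPostnikovTower w M) :
    ∃ (f : ∀ l, T₁.trunc l ⟶ T₂.trunc l) (F : ∀ l, T₁.termAt l ⟶ T₂.termAt l),
      (∀ l, f l ≫ T₂.ι l = T₁.ι l) ∧ Compat T₁ T₂ f F := by
  choose f hf using fun l => w.lift_trunc (T₂.trunc_dist l) (T₂.cone_mem l) (T₁.trunc_mem l)
    le_rfl (T₁.ι l)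
  have hstep : ∀ l, T₁.step l ≫ f (l + 1) = f l ≫ T₂.step l := by
    intro l
    rw [← sub_eq_zero]
    refine w.trunc_hom_ext (T₂.trunc_dist (l + 1)) (T₂.cone_mem (l + 1)) (T₁.trunc_mem l)
      (by lia) _ ?_
    rw [Preadditive.sub_comp, Category.assoc, Category.assoc, hf, T₁.step_ι, T₂.step_ι, hf,
      sub_self]
  have key : ∀ l, ∃ F : T₁.termAt (l + 1) ⟶ T₂.termAt (l + 1),
      T₁.sπ (l + 1) ≫ F⟦l + 1⟧' = f (l + 1) ≫ T₂.sπ (l + 1) ∧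
      T₁.sδ l ≫ (f l)⟦(1 : ℤ)⟧' = F⟦l + 1⟧' ≫ T₂.sδ l := by
    intro l
    obtain ⟨c, hc₁, hc₂⟩ : ∃ c : (T₁.termAt (l + 1))⟦l + 1⟧ ⟶ (T₂.termAt (l + 1))⟦l + 1⟧,
        T₁.sπ (l + 1) ≫ c = f (l + 1) ≫ T₂.sπ (l + 1) ∧
        T₁.sδ l ≫ (f l)⟦(1 : ℤ)⟧' = c ≫ T₂.sδ l :=
      complete_distinguished_triangle_morphism _ _ (T₁.step_dist l) (T₂.step_dist l)
        (f l) (f (l + 1)) (hstep l)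
    refine ⟨(shiftFunctor C (l + 1)).preimage c, ?_, ?_⟩
    · rw [Functor.map_preimage, hc₁]
    · rw [Functor.map_preimage, hc₂]
  obtain ⟨F, hF⟩ := exists_family (β := fun l => T₁.termAt l ⟶ T₂.termAt l) _ key
  refine ⟨f, F, hf, fun l => ?_, fun l => (hF l).2⟩
  obtain ⟨k, rfl⟩ : ∃ k, l = k + 1 := ⟨l - 1, by ring⟩
  exact (hF k).1

theorem Compat.isChainMap {T₁ T₂ : WeightPostnikovTower w M}
    {f : ∀ l, T₁.trunc l ⟶ T₂.trunc l} {F : ∀ l, T₁.termAt l ⟶ T₂.termAt l}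
    (h : Compat T₁ T₂ f F) : IsChainMapDown T₁.termAt T₂.termAt (towerD T₁) (towerD T₂) F := by
  intro l
  unfold towerD
  apply (shiftFunctor C (l + 1)).map_injective
  rw [← cancel_mono ((shiftFunctorAdd' C l 1 (l + 1) rfl).hom.app (T₂.termAt l))]
  have h4 := (shiftFunctorAdd' C l 1 (l + 1) rfl).hom.naturality (F l)
  simp only [Functor.comp_map] at h4
  have h1 := T₁.bd_eq l
  rw [Functor.map_comp, Functor.map_comp, Category.assoc, Category.assoc, T₂.bd_eq, h4,
    reassoc_of% h1, ← Functor.map_comp, h.comm_π, Functor.map_comp, ← Category.assoc,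
    ← h.comm_δ, Category.assoc]

theorem Compat.comp {T₁ T₂ T₃ : WeightPostnikovTower w M}
    {f : ∀ l, T₁.trunc l ⟶ T₂.trunc l} {F : ∀ l, T₁.termAt l ⟶ T₂.termAt l}
    {g : ∀ l, T₂.trunc l ⟶ T₃.trunc l} {G : ∀ l, T₂.termAt l ⟶ T₃.termAt l}
    (h : Compat T₁ T₂ f F) (h' : Compat T₂ T₃ g G) :
    Compat T₁ T₃ (fun l => f l ≫ g l) (fun l => F l ≫ G l) where
  comm_π l := by
    have h1 := h.comm_π l
    rw [Functor.map_comp, reassoc_of% h1, h'.comm_π, Category.assoc]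
  comm_δ l := by
    have h1 := h.comm_δ l
    rw [Functor.map_comp, Functor.map_comp, reassoc_of% h1, h'.comm_δ, Category.assoc]

/-- A morphism `w_{≤l}M[1] → N[l+1]` with `N` in the heart factors through `M^{-l}[l+1]`, since
it vanishes on `w_{≤l-1}M[1]` by orthogonality. -/
theorem exists_factor (T : WeightPostnikovTower w M) (l : ℤ) {N : C} (hN : N ∈ w.GE)
    (v : (T.trunc l)⟦(1 : ℤ)⟧ ⟶ N⟦l + 1⟧) :
    ∃ s : T.termAt l ⟶ N, v = (T.sπ l)⟦(1 : ℤ)⟧' ≫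
      (shiftFunctorAdd' C l 1 (l + 1) rfl).inv.app (T.termAt l) ≫ s⟦l + 1⟧' := by
  obtain ⟨k, rfl⟩ : ∃ k, l = k + 1 := ⟨l - 1, by ring⟩
  obtain ⟨y, hy⟩ := dist_desc_shift (T.step_dist k) v
    (w.hom_eq_zero (w.shift_mem_le (T.trunc_mem k) 1 _ rfl)
      (w.shift_mem_ge (w.mem_ge_zero.2 hN) (k + 1 + 1) _ rfl) (by lia) _)
  refine ⟨(shiftFunctor C (k + 1 + 1)).preimage
    ((shiftFunctorAdd' C (k + 1) 1 (k + 1 + 1) rfl).hom.app _ ≫ y), ?_⟩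
  rw [Functor.map_preimage, Iso.inv_hom_id_app_assoc, hy]

/-- An endomorphism of a tower lifting the identity of `M` differs from the identity on terms by
a sum `s d + d t`, where `s` and `t` need not agree. -/
theorem weak_homotopy (T : WeightPostnikovTower w M) {f : ∀ l, T.trunc l ⟶ T.trunc l}
    {F : ∀ l, T.termAt l ⟶ T.termAt l} (hf : ∀ l, f l ≫ T.ι l = T.ι l)
    (h : Compat T T f F) : ∃ s t : ∀ l : ℤ, T.termAt l ⟶ T.termAt (l + 1), ∀ l,
      F (l + 1) - 𝟙 _ = s (l + 1) ≫ towerD T (l + 1) + towerD T l ≫ t l := by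
  have hs : ∀ l, ∃ s : T.termAt l ⟶ T.termAt (l + 1),
      T.sπ l ≫ (F l - 𝟙 _ - s ≫ T.bd (l + 1) l)⟦l⟧' = 0 := by
    intro l
    have hz : (f l - 𝟙 _) ≫ T.step l = 0 := by
      refine w.trunc_hom_ext (T.trunc_dist (l + 1)) (T.cone_mem (l + 1)) (T.trunc_mem l)
        (by lia) _ ?_
      rw [Category.assoc, T.step_ι, Preadditive.sub_comp, hf, Category.id_comp, sub_self]
    obtain ⟨v, hv⟩ := dist_lift₁ (T.step_dist l) ((f l - 𝟙 _)⟦(1 : ℤ)⟧')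
      (by rw [← Functor.map_comp, hz, Functor.map_zero])
    obtain ⟨s, rfl⟩ := T.exists_factor l (T.term_mem (l + 1)).2 v
    refine ⟨s, ?_⟩
    apply (shiftFunctor C (1 : ℤ)).map_injective
    have h1 : T.sπ l ≫ (F l - 𝟙 _)⟦l⟧' = (f l - 𝟙 _) ≫ T.sπ l := by
      rw [Functor.map_sub, Preadditive.comp_sub, h.comm_π, CategoryTheory.Functor.map_id,
        Preadditive.sub_comp, Category.comp_id, Category.id_comp]
    have h2 := (shiftFunctorAdd' C l 1 (l + 1) rfl).inv.naturality (s ≫ T.bd (l + 1) l)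
    simp only [Functor.comp_map] at h2
    have h3 := T.bd_eq l
    rw [Functor.map_sub, Preadditive.comp_sub, h1, Functor.map_sub, Functor.map_comp, hv,
      Functor.map_zero, sub_eq_zero, Category.assoc, Category.assoc, Category.assoc, ← h3,
      ← Functor.map_comp_assoc, ← reassoc_of% h2, Iso.inv_hom_id_app, Functor.map_comp]
    simp
  choose s hs using hs
  have ht : ∀ l, ∃ t : T.termAt l ⟶ T.termAt (l + 1),
      F (l + 1) - 𝟙 _ - s (l + 1) ≫ T.bd (l + 1 + 1) (l + 1) = T.bd (l + 1) l ≫ t := by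
    intro l
    obtain ⟨x, hx⟩ := dist_desc₃ (T.step_dist l) _ (hs (l + 1))
    obtain ⟨t, rfl⟩ := T.exists_factor l (T.term_mem (l + 1)).2 x
    refine ⟨t, ?_⟩
    apply (shiftFunctor C (l + 1)).map_injective
    have h3 := T.bd_eq l
    rw [hx, ← reassoc_of% h3, Iso.hom_inv_id_app_assoc, Functor.map_comp]
  choose t ht using ht
  refine ⟨s, t, fun l => ?_⟩
  unfold towerD
  rw [← ht l]
  abel

theorem homotopyEquiv (T₁ T₂ : WeightPostnikovTower w M) :
    HomotopyEquivDown T₁.termAt T₂.termAt (towerD T₁) (towerD T₂) := by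
  obtain ⟨f, F, hf, hF⟩ := exists_compat T₁ T₂
  obtain ⟨g, G, hg, hG⟩ := exists_compat T₂ T₁
  exact homotopyEquiv_of_weak T₁.bd_comp_bd T₂.bd_comp_bd hF.isChainMap hG.isChainMap
    (T₁.weak_homotopy (fun l => by rw [Category.assoc, hg, hf]) (hF.comp hG))
    (T₂.weak_homotopy (fun l => by rw [Category.assoc, hf, hg]) (hG.comp hF))

/-! ### Towers with prescribed truncations -/

/-- Any system of weight decompositions of `M` underlies a weight Postnikov tower. -/
theorem exists_of_decompositions (P Q : ℤ → C) (ι : ∀ l, P l ⟶ M) (π : ∀ l, M ⟶ Q l)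
    (δ : ∀ l, Q l ⟶ (P l)⟦(1 : ℤ)⟧) (hT : ∀ l, Triangle.mk (ι l) (π l) (δ l) ∈ distTriang C)
    (hP : ∀ l, P l ∈ w.le l) (hQ : ∀ l, Q l ∈ w.ge (l + 1)) :
    ∃ T : WeightPostnikovTower w M, T.trunc = P := by
  choose step hstep using fun l : ℤ => w.lift_trunc (hT (l + 1)) (hQ (l + 1)) (hP l)
    (by lia) (ι l)
  have key : ∀ l, ∃ p : (Σ N : C, P (l + 1) ⟶ N⟦l + 1⟧),
      (p.1 ∈ w.LE ∧ p.1 ∈ w.GE) ∧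
      ∃ δ' : p.1⟦l + 1⟧ ⟶ (P l)⟦(1 : ℤ)⟧, Triangle.mk (step l) p.2 δ' ∈ distTriang C := by
    intro l
    obtain ⟨Z, a, b, hZ⟩ := distinguished_cocone_triangle (step l)
    have hle : Z ∈ w.le (l + 1) := by
      refine w.mem_le_of_orthogonal fun B hB x => ?_
      obtain ⟨y, rfl⟩ := dist_desc₃ hZ x (w.hom_eq_zero (hP (l + 1)) hB (by lia) _)
      rw [w.hom_eq_zero (w.shift_mem_le (hP l) 1 _ rfl) hB (by lia) y, comp_zero]
    -- Without the octahedral axiom, membership in `C_{w≥l+1}` is checked by a diagram chase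
    -- for morphisms out of an object `A` of `C_{w≤l}`.
    have hge : Z ∈ w.ge (l + 1) := by
      refine w.mem_ge_of_orthogonal fun A hA x => ?_
      have hxb : x ≫ b = 0 := by
        obtain ⟨y, hy⟩ := dist_lift₁ (hT l) (x ≫ b) (by
          have hb := dist_zero₃₁ hZ
          rw [← hstep l, Functor.map_comp, Category.assoc, reassoc_of% hb, zero_comp,
            comp_zero])
        rw [hy, w.hom_eq_zero hA (hQ l) (by lia) y, zero_comp]
      obtain ⟨y, rfl⟩ := dist_lift₃ hZ x hxb
      obtain ⟨z, hz⟩ := w.lift_trunc (hT l) (hQ l) hA le_rfl (y ≫ ι (l + 1))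
      have hyz : y - z ≫ step l = 0 := by
        refine w.trunc_hom_ext (hT (l + 1)) (hQ (l + 1)) hA (by lia) _ ?_
        rw [Preadditive.sub_comp, Category.assoc, hstep, hz, sub_self]
      rw [sub_eq_zero.1 hyz, Category.assoc, dist_zero₁₂ hZ, comp_zero]
    let e : Z⟦-(l + 1)⟧⟦l + 1⟧ ≅ Z := (shiftFunctorCompIsoId C (-(l + 1)) (l + 1) (by simp)).app Z
    refine ⟨⟨Z⟦-(l + 1)⟧, a ≫ e.inv⟩, ⟨hle, hge⟩, e.hom ≫ b, ?_⟩
    exact dist_of_iso₃ hZ e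
  obtain ⟨p, hp⟩ := exists_family (β := fun m => Σ N : C, P m ⟶ N⟦m⟧) _ key
  choose hp sδ hsδ using hp
  have hd : ∀ l, ∃ d : (p (l + 1)).1 ⟶ (p l).1,
      (shiftFunctor C (l + 1)).map d ≫
        (shiftFunctorAdd' C l 1 (l + 1) rfl).hom.app (p l).1 =
      sδ l ≫ (shiftFunctor C (1 : ℤ)).map (p l).2 := fun l =>
    ⟨(shiftFunctor C (l + 1)).preimage ((sδ l ≫ (shiftFunctor C (1 : ℤ)).map (p l).2) ≫
      (shiftFunctorAdd' C l 1 (l + 1) rfl).inv.app (p l).1), by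
        rw [Functor.map_preimage, Category.assoc, Iso.inv_hom_id_app]
        exact Category.comp_id _⟩
  choose d hd using hd
  have hbd : ∀ i j, ∃ b : (p i).1 ⟶ (p j).1, (j + 1 ≠ i → b = 0) ∧
      ∀ h : i = j + 1, b = eqToHom (by rw [h]) ≫ d j := by
    intro i j
    by_cases h : i = j + 1
    · exact ⟨eqToHom (by rw [h]) ≫ d j, fun h' => absurd h.symm h', fun _ => rfl⟩
    · exact ⟨0, fun _ => rfl, fun h' => absurd h' h⟩
  choose bd hbd₀ hbd₁ using hbd
  exact ⟨{  trunc := P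
            trunc_mem := hP
            ι := ι
            conePt := Q
            cone_mem := hQ
            coneπ := π
            coneδ := δ
            trunc_dist := hT
            step := step
            step_ι := hstep
            termAt := fun l => (p l).1
            term_mem := fun l => by
              obtain ⟨k, rfl⟩ : ∃ k, l = k + 1 := ⟨l - 1, by ring⟩
              exact hp k
            sπ := fun l => (p l).2
            sδ := sδ
            step_dist := hsδ
            bd := bd
            bd_shape := hbd₀
            bd_eq := fun l => by
              rw [hbd₁ (l + 1) l rfl, eqToHom_refl, Category.id_comp]
              exact hd l }, rfl⟩

theorem isZero_termAt (T : WeightPostnikovTower w M) {l : ℤ} (h : IsZero (T.trunc l))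
    (h' : IsZero (T.trunc (l + 1))) : IsZero (T.termAt (l + 1)) := by
  have hz : 𝟙 ((T.termAt (l + 1))⟦l + 1⟧) = 0 := by
    obtain ⟨y, hy⟩ := dist_desc₃ (T.step_dist l) (𝟙 _) (h'.eq_of_src _ _)
    rw [hy, (Functor.map_isZero (shiftFunctor C (1 : ℤ)) h).eq_of_src y 0, comp_zero]
  rw [IsZero.iff_id_eq_zero]
  apply (shiftFunctor C (l + 1)).map_injective
  rw [CategoryTheory.Functor.map_id, hz, Functor.map_zero]

open scoped ZeroObject in
/-- An object of `C_{w≥0}` has a tower whose terms in negative homological degrees vanish: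
the truncations in negative degrees of any tower can be replaced by `0`. -/
theorem exists_of_mem_GE (T : WeightPostnikovTower w M) (hM : M ∈ w.GE) :
    ∃ T' : WeightPostnikovTower w M, ∀ l < 0, IsZero (T'.termAt l) := by
  have key : ∀ l : ℤ, ∃ (P Q : C) (ι : P ⟶ M) (π : M ⟶ Q) (δ : Q ⟶ P⟦(1 : ℤ)⟧),
      Triangle.mk ι π δ ∈ distTriang C ∧ P ∈ w.le l ∧ Q ∈ w.ge (l + 1) ∧
        (l < 0 → IsZero P) := by
    intro l
    by_cases hl : l < 0
    · exact ⟨0, M, 0, 𝟙 M, 0, contractible_distinguished₁ M,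
        w.mem_le_of_orthogonal fun B _ x => (isZero_zero C).eq_of_src _ _,
        w.ge_anti (by lia) (w.mem_ge_zero.2 hM), fun _ => isZero_zero C⟩
    · exact ⟨_, _, _, _, _, T.trunc_dist l, T.trunc_mem l, T.cone_mem l, fun h => absurd h hl⟩
  choose P Q ι π δ hT hP hQ hz using key
  obtain ⟨T', rfl⟩ := exists_of_decompositions P Q ι π δ hT hP hQ
  refine ⟨T', fun l hl => ?_⟩
  obtain ⟨k, rfl⟩ : ∃ k, l = k + 1 := ⟨l - 1, by ring⟩
  exact T'.isZero_termAt (hz k (by lia)) (hz (k + 1) hl)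

end WeightPostnikovTower

/-- for a bounded weight structure, any two weight complexes of `M`
(arising from two weight Postnikov towers) are isomorphic in `K(Hw)` (i.e., homotopy
equivalent); moreover, if `M ∈ C_{w≥0}` then any weight complex of `M` is homotopy
equivalent to a complex with heart terms whose terms in positive (cohomological)
degrees vanish (the term `Y l` sits in cohomological degree `-l`). -/
theorem statement13 (w : WeightStructure C) (hw : w.IsBounded) (M : C)
    (T₁ T₂ : WeightPostnikovTower w M) :
    HomotopyEquivDown T₁.termAt T₂.termAt (towerD T₁) (towerD T₂) ∧
    (M ∈ w.GE → ∃ (Y : ℤ → C) (dY : ∀ l : ℤ, Y (l + 1) ⟶ Y l),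
      (∀ l : ℤ, Y l ∈ w.LE ∧ Y l ∈ w.GE) ∧
      (∀ l : ℤ, dY (l + 1) ≫ dY l = 0) ∧
      (∀ l : ℤ, l < 0 → IsZero (Y l)) ∧
      HomotopyEquivDown T₁.termAt Y (towerD T₁) dY) := by
  refine ⟨T₁.homotopyEquiv T₂, fun hM => ?_⟩
  obtain ⟨T, hT⟩ := T₁.exists_of_mem_GE hM
  exact ⟨T.termAt, towerD T, T.term_mem, T.bd_comp_bd, hT, T₁.homotopyEquiv T⟩

end CWH
end

section
/- Let w be a weight structure on a triangulated category C, let M be an object of C, and let a ≤ b be integers. Suppose a weight Postnikov tower for M is chosen such that w_{≤i}M = 0 for all i < a and the structure morphism w_{≤b}M → M is an isomorphism, and let (M^i) be the associated weight complex. Then M belongs to the extension-closure in C of the set {M^{−i}[i] : a ≤ i ≤ b}. -/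
/-!
The triangles `w_{≤l}M → w_{≤l+1}M → M^{-l-1}[l+1]` of the tower exhibit each truncation as an
extension of a shifted term of the weight complex by the previous truncation. Starting from
`w_{≤a-1}M = 0`, induction places `w_{≤b}M` in the extension-closure (`extClosure_trunc`).
The extension-closure is invariant under isomorphism because an isomorphism has zero cone, so it
also contains `M`.
-/

open CategoryTheory CategoryTheory.Limits CategoryTheory.Pretriangulated

namespace CWH

variable (C : Type*) [Category C] [HasZeroObject C] [HasShift C ℤ]
  [Preadditive C] [∀ n : ℤ, (shiftFunctor C n).Additive] [Pretriangulated C]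

variable {C}

/-- Induction up the tower: `w_{≤a-1+n}M` is an extension of `M^{-(a-1+n)}[a-1+n]` by
`w_{≤a-1+(n-1)}M`, starting from `w_{≤a-1}M = 0`. -/
lemma extClosure_trunc {w : WeightStructure C} {M : C} (T : WeightPostnikovTower w M)
    {a b : ℤ} (h : IsZero (T.trunc (a - 1))) (n : ℕ) (hn : a - 1 + n ≤ b) :
    ExtClosure {X : C | ∃ i : ℤ, a ≤ i ∧ i ≤ b ∧ X = (T.termAt i)⟦i⟧}
      (T.trunc (a - 1 + n)) := by
  induction n with
  | zero => simpa using ExtClosure.zero _ h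
  | succ n ih =>
    push_cast at hn ⊢
    rw [← add_assoc] at hn ⊢
    exact .ext _ _ _ (T.step_dist (a - 1 + n)) (ih (by lia))
      (.of _ ⟨a - 1 + n + 1, by lia, hn, rfl⟩)

/-- if a weight Postnikov tower for `M` satisfies `w_{≤i}M = 0` for
`i < a` and `w_{≤b}M ≅ M`, then `M` belongs to the extension-closure of
`{M^{-i}[i] : a ≤ i ≤ b}` (recall `termAt i = M^{-i}`). -/
theorem statement15 (w : WeightStructure C) (M : C) (a b : ℤ) (hab : a ≤ b)
    (T : WeightPostnikovTower w M)
    (h1 : ∀ i : ℤ, i < a → IsZero (T.trunc i))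
    (h2 : IsIso (T.ι b)) :
    ExtClosure {X : C | ∃ i : ℤ, a ≤ i ∧ i ≤ b ∧ X = (T.termAt i)⟦i⟧} M := by
  obtain ⟨n, hn⟩ := Int.eq_ofNat_of_zero_le (show 0 ≤ b - (a - 1) by lia)
  have hb : a - 1 + (n : ℤ) = b := by lia
  have key := extClosure_trunc T (b := b) (h1 (a - 1) (by lia)) n hb.le
  rw [hb] at key
  -- The cone of the isomorphism `w_{≤b}M → M` vanishes, so `M` is an extension of `0` by `w_{≤b}M`.
  have hz : IsZero (T.conePt b) := Triangle.isZero₃_of_isIso₁ _ (T.trunc_dist b) h2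
  exact .ext _ _ _ (T.trunc_dist b) key (.zero _ hz)

end CWH
end

section
/- Let w be a weight structure on a triangulated category C, let N ∈ C_{w=0} and M ∈ C_{w≥0}, and let f : N → M be a morphism that factors through some object L of C. Then for any choice of weight Postnikov tower for L with associated weight complex (L^i), the morphism f factors through the zeroth term L^0: there exist morphisms u : N → L^0 and v : L^0 → M with f = v ∘ u. -/
/-!
The morphism `a : N ⟶ L` composed with `L ⟶ w_{≥1}L` vanishes by orthogonality, so `a`
lifts to `a' : N ⟶ w_{≤0}L`. Likewise `w_{≤-1}L ⟶ w_{≤0}L ⟶ L ⟶ M` vanishes by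
orthogonality, so `w_{≤0}L ⟶ M` extends along `w_{≤0}L ⟶ L^0` in the distinguished triangle
`w_{≤-1}L ⟶ w_{≤0}L ⟶ L^0`. Hence `f` is the composite `N ⟶ w_{≤0}L ⟶ L^0 ⟶ M`.
-/

open CategoryTheory CategoryTheory.Limits CategoryTheory.Pretriangulated

namespace CWH

variable (C : Type*) [Category C] [HasZeroObject C] [HasShift C ℤ]
  [Preadditive C] [∀ n : ℤ, (shiftFunctor C n).Additive] [Pretriangulated C]

variable {C}

namespace WeightStructure

/-- Orthogonality for a target known to be of weight `≥ 1`. -/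
lemma hom_eq_zero_of_ge_one (w : WeightStructure C) {X Y : C} (hX : X ∈ w.LE)
    (hY : Y⟦(-1 : ℤ)⟧ ∈ w.GE) (g : X ⟶ Y) : g = 0 := by
  let e := (shiftFunctorCompIsoId C (-1 : ℤ) 1 (by norm_num)).app Y
  have h : g ≫ e.inv = 0 := w.orthogonal hX hY _
  exact (cancel_mono e.inv).1 (by rw [h, zero_comp])

/-- Orthogonality for a source known to be of weight `≤ -1`. -/
lemma hom_eq_zero_of_le_neg_one (w : WeightStructure C) {X Y : C}
    (hX : X⟦(1 : ℤ)⟧ ∈ w.LE) (hY : Y ∈ w.GE) (g : X ⟶ Y) : g = 0 := by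
  apply (shiftFunctor C (1 : ℤ)).map_injective
  rw [Functor.map_zero]
  exact w.orthogonal hX hY _

end WeightStructure

/-- if `N ∈ C_{w=0}`, `M ∈ C_{w≥0}` and `f : N ⟶ M` factors through an
object `L`, then `f` factors through the zeroth term `L^0 = termAt 0` of any weight
complex of `L`. -/
theorem statement16 (w : WeightStructure C) (N M L : C)
    (hN : N ∈ w.LE ∩ w.GE) (hM : M ∈ w.GE)
    (f : N ⟶ M) (a : N ⟶ L) (b : L ⟶ M) (hf : a ≫ b = f)
    (T : WeightPostnikovTower w L) :
    ∃ (u : N ⟶ T.termAt 0) (v : T.termAt 0 ⟶ M), u ≫ v = f := by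
  -- Keep `l = -1` opaque, so that the index `l + 1` in the tower stays syntactic
  -- until it is rewritten to `0` in the whole claim at once.
  obtain ⟨l, hl⟩ : ∃ l : ℤ, l + 1 = 0 := ⟨-1, by norm_num⟩
  have key : ∃ (u : N ⟶ (T.termAt (l + 1))⟦l + 1⟧) (v : (T.termAt (l + 1))⟦l + 1⟧ ⟶ M),
      u ≫ v = f := by
    have ha : a ≫ T.coneπ (l + 1) = 0 := by
      apply w.hom_eq_zero_of_ge_one hN.1
      have h := T.cone_mem (l + 1)
      rwa [WeightStructure.ge, Set.mem_ofPred_eq, show -(l + 1 + 1) = (-1 : ℤ) by lia] at h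
    obtain ⟨a', ha'⟩ := Triangle.coyoneda_exact₂ _ (T.trunc_dist (l + 1)) a ha
    have hb : T.step l ≫ T.ι (l + 1) ≫ b = 0 := by
      refine w.hom_eq_zero_of_le_neg_one ?_ hM _
      have h := T.trunc_mem l
      rwa [WeightStructure.le, Set.mem_ofPred_eq, show -l = (1 : ℤ) by lia] at h
    obtain ⟨v, hv⟩ := Triangle.yoneda_exact₂ _ (T.step_dist l) (T.ι (l + 1) ≫ b) hb
    dsimp only [Triangle.mk] at a' ha' v hv
    exact ⟨a' ≫ T.sπ (l + 1), v, by rw [Category.assoc, ← hv, ← Category.assoc, ← ha', hf]⟩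
  rw [hl] at key
  obtain ⟨u, v, huv⟩ := key
  let e := (shiftFunctorZero C ℤ).app (T.termAt 0)
  exact ⟨u ≫ e.hom, e.inv ≫ v, by simp [huv]⟩

end CWH
end
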